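/- arXiv:math/0403181 — 8 statements merged into one kernel-verified Lean document; each statement's English description precedes it below -/
import Mathlib

section
/- Every medial quasigroup is hamiltonian: if Q is a quasigroup satisfying (x·y)·(u·v) = (x·u)·(y·v) for all x, y, u, v ∈ Q, then every subquasigroup of Q is normal in Q. -/
/-- A (binary operation on a nonempty set is a) quasigroup: all left and right
translations are bijections. -/
def IsQuasigroup {Q : Type*} (mul : Q → Q → Q) : Prop :=
  Nonempty Q ∧ ∀ a : Q,
    Function.Bijective (fun x => mul a x) ∧ Function.Bijective (fun x => mul x a)

/-- A subquasigroup: a nonempty subset closed under multiplication and under both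
divisions (the unique solutions of `a·x = b` and `y·a = b` for `a, b ∈ P` lie in `P`). -/
def IsSubquasigroup {Q : Type*} (mul : Q → Q → Q) (P : Set Q) : Prop :=
  P.Nonempty ∧ ∀ a ∈ P, ∀ b ∈ P,
    mul a b ∈ P ∧ (∀ x, mul a x = b → x ∈ P) ∧ (∀ y, mul y a = b → y ∈ P)

/-- A normal congruence: an equivalence relation satisfying (C1), (C2), (C3). -/
def IsNormalCongruence {Q : Type*} (mul : Q → Q → Q) (r : Q → Q → Prop) : Prop :=
  Equivalence r ∧
  (∀ a b c d, r a b → r c d → r (mul a c) (mul b d)) ∧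
  (∀ a b c d, r a b → r (mul a c) (mul b d) → r c d) ∧
  (∀ a b c d, r c d → r (mul a c) (mul b d) → r a b)

/-- A subquasigroup is normal if it is an equivalence class of some normal congruence. -/
def IsNormalSubquasigroup {Q : Type*} (mul : Q → Q → Q) (P : Set Q) : Prop :=
  IsSubquasigroup mul P ∧
  ∃ r : Q → Q → Prop, IsNormalCongruence mul r ∧ ∃ a : Q, P = {x | r a x}

/-- A quasigroup is hamiltonian if every subquasigroup is normal. -/
def IsHamiltonian {Q : Type*} (mul : Q → Q → Q) : Prop :=
  ∀ P : Set Q, IsSubquasigroup mul P → IsNormalSubquasigroup mul P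

/-- Every medial quasigroup is hamiltonian. -/
theorem medial_is_hamiltonian {Q : Type*} (mul : Q → Q → Q)
    (hQ : IsQuasigroup mul)
    (hmed : ∀ x y u v : Q, mul (mul x y) (mul u v) = mul (mul x u) (mul y v)) :
    IsHamiltonian mul := by
  intro P hP
  refine ⟨hP, ?_⟩
  obtain ⟨⟨e, he⟩, hc⟩ := hP
  obtain ⟨-, hq⟩ := hQ
  have cl : ∀ a x y, mul a x = mul a y → x = y := fun a x y h => (hq a).1.1 h
  have cr : ∀ a x y, mul x a = mul y a → x = y := fun a x y h => (hq a).2.1 h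
  have ex : ∀ a b, ∃ x, mul a x = b := fun a b => (hq a).1.2 b
  have ey : ∀ a b, ∃ x, mul x a = b := fun a b => (hq a).2.2 b
  have hm : ∀ a ∈ P, ∀ b ∈ P, mul a b ∈ P := fun a ha b hb => (hc a ha b hb).1
  have exP : ∀ a ∈ P, ∀ b ∈ P, ∃ x ∈ P, mul a x = b := fun a ha b hb => by
    obtain ⟨x, hx⟩ := ex a b
    exact ⟨x, (hc a ha b hb).2.1 x hx, hx⟩
  have eyP : ∀ a ∈ P, ∀ b ∈ P, ∃ x ∈ P, mul x a = b := fun a ha b hb => by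
    obtain ⟨x, hx⟩ := ey a b
    exact ⟨x, (hc a ha b hb).2.2 x hx, hx⟩
  have key : ∀ x y, (∃ p ∈ P, ∃ q ∈ P, mul x p = mul y q) →
      ∀ p' ∈ P, ∃ q' ∈ P, mul x p' = mul y q' := by
    rintro x y ⟨p, hp, q, hq, h⟩ p' hp'
    obtain ⟨z, hz⟩ := ex y (mul x p')
    obtain ⟨s, hs, hs'⟩ := exP q hq (mul p e) (hm p hp e he)
    have h1 : mul (mul y q) (mul z s) = mul (mul y q) (mul p' e) := by
      rw [hmed y q z s, hz, hs', hmed x p' p e, h]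
    have h2 := cl _ _ _ h1
    exact ⟨z, (hc s hs (mul p' e) (hm p' hp' e he)).2.2 z h2, hz.symm⟩
  refine ⟨fun x y => ∃ p ∈ P, ∃ q ∈ P, mul x p = mul y q, ⟨⟨?_, ?_, ?_⟩, ?_, ?_, ?_⟩, e, ?_⟩
  · exact fun x => ⟨e, he, e, he, rfl⟩
  · rintro x y ⟨p, hp, q, hq, h⟩
    exact ⟨q, hq, p, hp, h.symm⟩
  · rintro x y z ⟨p, hp, q, hq, h⟩ h'
    obtain ⟨w, hw, h2⟩ := key _ _ h' q hq
    exact ⟨p, hp, w, hw, h.trans h2⟩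
  · rintro a b c d ⟨p, hp, q, hq, h⟩ ⟨p', hp', q', hq', h'⟩
    exact ⟨mul p p', hm _ hp _ hp', mul q q', hm _ hq _ hq', by
      rw [hmed a c, hmed b d, h, h']⟩
  · rintro a b c d ⟨p, hp, q, hq, h⟩ h'
    obtain ⟨w, hw, h2⟩ := key _ _ h' (mul p e) (hm _ hp _ he)
    obtain ⟨q', hq', rfl⟩ := exP q hq w hw
    rw [hmed a c, hmed b d, h] at h2
    exact ⟨e, he, q', hq', cl _ _ _ h2⟩
  · rintro a b c d ⟨p, hp, q, hq, h⟩ h'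
    obtain ⟨w, hw, h2⟩ := key _ _ h' (mul e p) (hm _ he _ hp)
    obtain ⟨q', hq', rfl⟩ := eyP q hq w hw
    rw [hmed a c, hmed b d, h] at h2
    exact ⟨e, he, q', hq', cr _ _ _ h2⟩
  · ext x
    constructor
    · intro hx
      obtain ⟨q, hq, h⟩ := exP x hx (mul e e) (hm _ he _ he)
      exact ⟨e, he, q, hq, h.symm⟩
    · rintro ⟨p, hp, q, hq, h⟩
      exact (hc q hq _ (hm e he p hp)).2.2 x h.symm
end

section
/- Let Q be a left distributive quasigroup and P a subquasigroup of Q. Then P is normal in Q if and only if the following condition (C4) holds: whenever a, b, x, y, z ∈ Q satisfy (x·a)·(y·b) = z·(a·b) and at least two of the three elements x, y, z lie in P, then the remaining one also lies in P. -/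
/-- A subquasigroup `P` of a left distributive quasigroup `Q` is normal if and only if
condition (C4) holds: whenever `(x·a)·(y·b) = z·(a·b)` and two of `x, y, z` lie in `P`,
then so does the third. -/
theorem normal_iff_C4 {Q : Type*} (mul : Q → Q → Q)
    (hQ : IsQuasigroup mul)
    (hld : ∀ x a b : Q, mul x (mul a b) = mul (mul x a) (mul x b))
    (P : Set Q) (hP : IsSubquasigroup mul P) :
    IsNormalSubquasigroup mul P ↔
      ∀ a b x y z : Q, mul (mul x a) (mul y b) = mul z (mul a b) →
        ((x ∈ P → y ∈ P → z ∈ P) ∧ (x ∈ P → z ∈ P → y ∈ P) ∧ (y ∈ P → z ∈ P → x ∈ P)) := by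
  have lsol : ∀ a b, ∃ x, mul a x = b := fun a b => (hQ.2 a).1.2 b
  have rsol : ∀ a b, ∃ x, mul x a = b := fun a b => (hQ.2 a).2.2 b
  have rcan : ∀ a x y, mul x a = mul y a → x = y := fun a x y h => (hQ.2 a).2.1 h
  have idem : ∀ x, mul x x = x := fun x => (rcan (mul x x) _ _ (hld x x x)).symm
  constructor
  · rintro ⟨-, r, ⟨heq, h1, h2, h3⟩, e, rfl⟩ a b x y z h
    simp only [Set.mem_setOf_eq]
    refine ⟨fun hx hy => ?_, fun hx hz => ?_, fun hy hz => ?_⟩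
    · have hxy : r x y := heq.trans (heq.symm hx) hy
      have : r (mul x (mul a b)) (mul z (mul a b)) := by
        rw [← h, hld]
        exact h1 _ _ _ _ (heq.refl _) (h1 _ _ _ _ hxy (heq.refl _))
      exact heq.trans hx (h3 _ _ _ _ (heq.refl _) this)
    · have hxz : r x z := heq.trans (heq.symm hx) hz
      have : r (mul x (mul a b)) (mul z (mul a b)) := h1 _ _ _ _ hxz (heq.refl _)
      rw [← h, hld] at this
      exact heq.trans hx (h3 _ _ _ _ (heq.refl _) (h2 _ _ _ _ (heq.refl _) this))
    · have hyz : r y z := heq.trans (heq.symm hy) hz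
      have : r (mul y (mul a b)) (mul z (mul a b)) := h1 _ _ _ _ hyz (heq.refl _)
      rw [← h, hld] at this
      exact heq.trans hy (h3 _ _ _ _ (heq.refl _) (h3 _ _ _ _ (heq.refl _) this))
  · intro C
    have Z : ∀ a b, ∀ x ∈ P, ∀ y ∈ P, ∃ z ∈ P, mul (mul x a) (mul y b) = mul z (mul a b) := by
      intro a b x hx y hy
      obtain ⟨z, hz⟩ := rsol (mul a b) (mul (mul x a) (mul y b))
      exact ⟨z, (C a b x y z hz.symm).1 hx hy, hz.symm⟩
    have Y : ∀ a b, ∀ x ∈ P, ∀ z ∈ P, ∃ y ∈ P, mul (mul x a) (mul y b) = mul z (mul a b) := by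
      intro a b x hx z hz
      obtain ⟨t, ht⟩ := lsol (mul x a) (mul z (mul a b))
      obtain ⟨y, rfl⟩ := rsol b t
      exact ⟨y, (C a b x y z ht).2.1 hx hz, ht⟩
    have X : ∀ a b, ∀ y ∈ P, ∀ z ∈ P, ∃ x ∈ P, mul (mul x a) (mul y b) = mul z (mul a b) := by
      intro a b y hy z hz
      obtain ⟨t, ht⟩ := rsol (mul y b) (mul z (mul a b))
      obtain ⟨x, rfl⟩ := rsol a t
      exact ⟨x, (C a b x y z ht).2.2 hy hz, ht⟩
    have K : ∀ a b, ∀ x ∈ P, ∀ y ∈ P, ∀ p ∈ P, mul x a = mul y b → ∃ q ∈ P, mul p a = mul q b := by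
      intro a b x hx y hy p hp h
      obtain ⟨z, hz, e1⟩ := X a a x hx p hp
      obtain ⟨w, hw, e2⟩ := Z a b z hz y hy
      obtain ⟨q', hq', e3⟩ := Y a b x hx w hw
      obtain ⟨q, hq, e4⟩ := Z b b y hy q' hq'
      refine ⟨q, hq, ?_⟩
      rw [idem] at e1 e4
      rw [← e1, ← e4, h, e2, ← e3, h]
    obtain ⟨e, he⟩ := hP.1
    refine ⟨hP, fun a b => ∃ x ∈ P, ∃ y ∈ P, mul x a = mul y b, ⟨⟨?_, ?_, ?_⟩, ?_, ?_, ?_⟩, e, ?_⟩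
    · exact fun a => ⟨e, he, e, he, rfl⟩
    · rintro a b ⟨x, hx, y, hy, h⟩
      exact ⟨y, hy, x, hx, h.symm⟩
    · rintro a b c ⟨x, hx, y, hy, h⟩ ⟨z, hz, w, hw, h'⟩
      obtain ⟨q, hq, h2⟩ := K b c z hz w hw y hy h'
      exact ⟨x, hx, q, hq, h.trans h2⟩
    · rintro a b c d ⟨x, hx, y, hy, h⟩ ⟨x', hx', y', hy', h'⟩
      obtain ⟨z, hz, e1⟩ := Z a c x hx x' hx'
      obtain ⟨w, hw, e2⟩ := Z b d y hy y' hy'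
      exact ⟨z, hz, w, hw, by rw [← e1, ← e2, h, h']⟩
    · rintro a b c d ⟨x, hx, y, hy, h⟩ ⟨z, hz, w, hw, h'⟩
      obtain ⟨x', hx', e1⟩ := Y a c x hx z hz
      obtain ⟨y', hy', e2⟩ := Y b d y hy w hw
      refine ⟨x', hx', y', hy', (hQ.2 (mul x a)).1.1 ?_⟩
      show mul (mul x a) (mul x' c) = mul (mul x a) (mul y' d)
      rw [e1, h', ← e2, h]
    · rintro a b c d ⟨x', hx', y', hy', h⟩ ⟨z, hz, w, hw, h'⟩
      obtain ⟨x, hx, e1⟩ := X a c x' hx' z hz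
      obtain ⟨y, hy, e2⟩ := X b d y' hy' w hw
      refine ⟨x, hx, y, hy, rcan (mul x' c) _ _ ?_⟩
      rw [e1, h', ← e2, h]
    · ext t
      constructor
      · intro ht
        obtain ⟨x, hx⟩ := rsol e (mul e t)
        exact ⟨x, (hP.2 e he _ (hP.2 e he t ht).1).2.2 x hx, e, he, hx⟩
      · rintro ⟨x, hx, y, hy, h⟩
        exact (hP.2 y hy _ (hP.2 x hx e he).1).2.1 t h.symm
end

section
/- Let Q be a left distributive quasigroup and P a subquasigroup of Q; for a, b ∈ Q write Pa = {p·a : p ∈ P} and Pa·Pb = {(p·a)·(q·b) : p, q ∈ P}. Then: (i) {p·(a·b) : p ∈ P} ⊆ Pa·Pb and |P| ≤ |Pa·Pb| ≤ |P|² for all a, b ∈ Q; (ii) if P is finite, then P is normal in Q if and only if |Pa·Pb| = |P| for all a, b ∈ Q. -/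
/-- For a subquasigroup `P` of a left distributive quasigroup `Q`, writing
`Pa·Pb = {(p·a)·(q·b) : p, q ∈ P}`:
(i) `P·(a·b) ⊆ Pa·Pb` and `|P| ≤ |Pa·Pb| ≤ |P|²` for all `a, b`;
(ii) if `P` is finite, then `P` is normal iff `|Pa·Pb| = |P|` for all `a, b`. -/
theorem subquasigroup_coset_cardinalities {Q : Type*} (mul : Q → Q → Q)
    (hQ : IsQuasigroup mul)
    (hld : ∀ x a b : Q, mul x (mul a b) = mul (mul x a) (mul x b))
    (P : Set Q) (hP : IsSubquasigroup mul P) :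
    (∀ a b : Q,
      (fun p => mul p (mul a b)) '' P ⊆
          Set.image2 (fun p q => mul (mul p a) (mul q b)) P P ∧
      Cardinal.mk ↥P ≤ Cardinal.mk ↥(Set.image2 (fun p q => mul (mul p a) (mul q b)) P P) ∧
      Cardinal.mk ↥(Set.image2 (fun p q => mul (mul p a) (mul q b)) P P) ≤ Cardinal.mk ↥P ^ 2) ∧
    (P.Finite →
      (IsNormalSubquasigroup mul P ↔
        ∀ a b : Q, (Set.image2 (fun p q => mul (mul p a) (mul q b)) P P).ncard = P.ncard)) := by
  have injL : ∀ a, Function.Injective (fun x => mul a x) := fun a => (hQ.2 a).1.1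
  have injR : ∀ a, Function.Injective (fun x => mul x a) := fun a => (hQ.2 a).2.1
  have hsub : ∀ a b : Q, (fun p => mul p (mul a b)) '' P ⊆
      Set.image2 (fun p q => mul (mul p a) (mul q b)) P P := by
    rintro a b _ ⟨p, hp, rfl⟩
    exact ⟨p, hp, p, hp, (hld p a b).symm⟩
  refine ⟨fun a b => ⟨hsub a b, ?_, ?_⟩, ?_⟩
  · rw [← Cardinal.mk_image_eq (s := P) (injR (mul a b))]
    exact Cardinal.mk_le_mk_of_subset (hsub a b)
  · rw [← Set.image_uncurry_prod, pow_two, Cardinal.mul_def]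
    refine Cardinal.mk_image_le.trans ?_
    exact (Cardinal.mk_congr (Equiv.Set.prod P P)).le
  intro hfin
  constructor
  · rintro ⟨_, r, ⟨heq, h1, h2, h3⟩, e, rfl⟩ a b
    rw [← Set.ncard_image_of_injective {x | r e x} (injR (mul a b))]
    congr 1
    refine Set.Subset.antisymm ?_ (hsub a b)
    rintro _ ⟨p, hp, q, hq, rfl⟩
    obtain ⟨y, hy⟩ := (hQ.2 (mul a b)).2.2 (mul (mul p a) (mul q b))
    refine ⟨y, ?_, hy⟩
    have hy : mul y (mul a b) = mul (mul p a) (mul q b) := hy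
    have hpq : r p q := heq.trans (heq.symm hp) hq
    have : r (mul p (mul a b)) (mul y (mul a b)) := by
      rw [hy, hld]
      exact h1 _ _ _ _ (heq.refl _) (h1 _ _ _ _ hpq (heq.refl _))
    exact heq.trans hp (h3 _ _ _ _ (heq.refl _) this)
  · intro hc
    let C : Q → Set Q := fun a => (fun p => mul p a) '' P
    have hCfin : ∀ a, (C a).Finite := fun a => hfin.image _
    have hCcard : ∀ a, (C a).ncard = P.ncard := fun a =>
      Set.ncard_image_of_injective _ (injR a)
    have hI : ∀ a b, C (mul a b) = Set.image2 (fun p q => mul (mul p a) (mul q b)) P P := by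
      intro a b
      refine Set.eq_of_subset_of_ncard_le (hsub a b) ?_ (hfin.image2 _ hfin)
      rw [hc, hCcard]
    have hmul : ∀ a b x y, x ∈ C a → y ∈ C b → mul x y ∈ C (mul a b) := by
      rintro a b _ _ ⟨p, hp, rfl⟩ ⟨q, hq, rfl⟩
      rw [hI]
      exact ⟨p, hp, q, hq, rfl⟩
    have hL : ∀ a b x, x ∈ C a → (fun y => mul x y) '' C b = C (mul a b) := by
      intro a b x hx
      refine Set.eq_of_subset_of_ncard_le ?_ ?_ (hCfin _)
      · rintro _ ⟨y, hy, rfl⟩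
        exact hmul _ _ _ _ hx hy
      · rw [Set.ncard_image_of_injective _ (injL x), hCcard, hCcard]
    have hR : ∀ a b y, y ∈ C b → (fun x => mul x y) '' C a = C (mul a b) := by
      intro a b y hy
      refine Set.eq_of_subset_of_ncard_le ?_ ?_ (hCfin _)
      · rintro _ ⟨x, hx, rfl⟩
        exact hmul _ _ _ _ hx hy
      · rw [Set.ncard_image_of_injective _ (injR y), hCcard, hCcard]
    obtain ⟨p0, hp0⟩ := hP.1
    have hdis : ∀ a b c, c ∈ C a → c ∈ C b → C a = C b := by
      intro a b c ha hb
      have hy : mul p0 p0 ∈ C p0 := ⟨p0, hp0, rfl⟩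
      have h : C (mul a p0) = C (mul b p0) := by rw [← hL a p0 c ha, hL b p0 c hb]
      rw [← hR a p0 _ hy, ← hR b p0 _ hy] at h
      exact (injR _).image_injective h
    have hcov : ∀ x, ∃ a, x ∈ C a := by
      intro x
      obtain ⟨a, ha⟩ := (hQ.2 p0).1.2 x
      exact ⟨a, p0, hp0, ha⟩
    have hP0 : C p0 = P := by
      ext x
      constructor
      · rintro ⟨p, hp, rfl⟩
        exact (hP.2 p hp p0 hp0).1
      · intro hx
        obtain ⟨y, hy⟩ := (hQ.2 p0).2.2 x
        exact ⟨y, (hP.2 p0 hp0 x hx).2.2 y hy, hy⟩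
    refine ⟨hP, fun x y => ∃ a, x ∈ C a ∧ y ∈ C a, ⟨⟨?_, ?_, ?_⟩, ?_, ?_, ?_⟩, p0, ?_⟩
    · intro x
      obtain ⟨a, ha⟩ := hcov x
      exact ⟨a, ha, ha⟩
    · rintro x y ⟨a, h, h'⟩
      exact ⟨a, h', h⟩
    · rintro x y z ⟨a, h, h'⟩ ⟨b, k, k'⟩
      refine ⟨a, h, ?_⟩
      rw [hdis a b y h' k]
      exact k'
    · rintro x y u v ⟨a, h, h'⟩ ⟨b, k, k'⟩
      exact ⟨mul a b, hmul _ _ _ _ h k, hmul _ _ _ _ h' k'⟩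
    · rintro x y u v ⟨a, h, h'⟩ ⟨c, k, k'⟩
      obtain ⟨b, hb⟩ := hcov u
      refine ⟨b, hb, ?_⟩
      rw [hdis _ _ _ k (hmul _ _ _ _ h hb), ← hL a b y h'] at k'
      obtain ⟨w, hw, hwv⟩ := k'
      rwa [← injL y hwv]
    · rintro x y u v ⟨b, h, h'⟩ ⟨c, k, k'⟩
      obtain ⟨a, ha⟩ := hcov x
      refine ⟨a, ha, ?_⟩
      rw [hdis _ _ _ k (hmul _ _ _ _ ha h), ← hR a b v h'] at k'
      obtain ⟨w, hw, hwv⟩ := k'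
      rwa [← injR v hwv]
    · ext x
      constructor
      · intro hx
        exact ⟨p0, by rwa [hP0], by rwa [hP0]⟩
      · rintro ⟨a, h, h'⟩
        rw [← hP0, hdis p0 a p0 (by rwa [hP0]) h]
        exact h'
end

section
/- Let Q be a left distributive quasigroup and let a ∈ Q. The following conditions are equivalent: (i) for every x ∈ Q with x ≠ a, the subquasigroup generated by {a, x} is normal in Q; (ii) every subquasigroup of Q generated by two elements is normal in Q; (iii) Q is hamiltonian. -/
/-- The subquasigroup generated by a subset `S`: the smallest subquasigroup containing `S`. -/
def genSubquasigroup {Q : Type*} (mul : Q → Q → Q) (S : Set Q) : Set Q :=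
  ⋂₀ {P : Set Q | IsSubquasigroup mul P ∧ S ⊆ P}

theorem rtg_lift {Q : Type*} {s : Q → Q → Prop} (f : Q → Q)
    (hf : ∀ y z, s y z → s (f y) (f z)) {y z : Q} (h : Relation.ReflTransGen s y z) :
    Relation.ReflTransGen s (f y) (f z) := by
  induction h with
  | refl => exact .refl
  | tail _ h2 ih => exact .tail ih (hf _ _ h2)

theorem gen_isSub {Q : Type*} (mul : Q → Q → Q) (S : Set Q) (x : Q) (hx : x ∈ S) :
    IsSubquasigroup mul (genSubquasigroup mul S) := by
  refine ⟨⟨x, fun P hP => hP.2 hx⟩, fun u hu v hv => ⟨?_, ?_, ?_⟩⟩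
  · exact fun P hP => (hP.1.2 u (hu P hP) v (hv P hP)).1
  · exact fun y hy P hP => (hP.1.2 u (hu P hP) v (hv P hP)).2.1 y hy
  · exact fun y hy P hP => (hP.1.2 u (hu P hP) v (hv P hP)).2.2 y hy

theorem sub_preimage {Q : Type*} {mul : Q → Q → Q} (f : Q ≃ Q)
    (hf : ∀ x y, f (mul x y) = mul (f x) (f y)) {P : Set Q} (hP : IsSubquasigroup mul P) :
    IsSubquasigroup mul (f ⁻¹' P) := by
  obtain ⟨⟨p, hp⟩, h⟩ := hP
  refine ⟨⟨f.symm p, by simpa using hp⟩, fun u hu v hv => ⟨?_, ?_, ?_⟩⟩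
  · show f _ ∈ P
    rw [hf]; exact (h _ hu _ hv).1
  · intro x hx
    exact (h _ hu _ hv).2.1 _ (by rw [← hf, hx])
  · intro x hx
    exact (h _ hu _ hv).2.2 _ (by rw [← hf, hx])

theorem normal_preimage {Q : Type*} {mul : Q → Q → Q} (f : Q ≃ Q)
    (hf : ∀ x y, f (mul x y) = mul (f x) (f y)) {P : Set Q}
    (hP : IsNormalSubquasigroup mul P) :
    IsNormalSubquasigroup mul (f ⁻¹' P) := by
  obtain ⟨hs, r, ⟨he, h1, h2, h3⟩, c, rfl⟩ := hP
  refine ⟨sub_preimage f hf hs, fun x y => r (f x) (f y), ⟨⟨fun x => he.refl _,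
    fun h => he.symm h, fun h k => he.trans h k⟩, ?_, ?_, ?_⟩, f.symm c, ?_⟩
  · intro a b c d h k
    simpa only [hf] using h1 _ _ _ _ h k
  · intro a b c d h k
    simp only [hf] at k
    exact h2 _ _ _ _ h k
  · intro a b c d h k
    simp only [hf] at k
    exact h3 _ _ _ _ h k
  · ext x; simp

theorem gen_preimage {Q : Type*} {mul : Q → Q → Q} (f : Q ≃ Q)
    (hf : ∀ x y, f (mul x y) = mul (f x) (f y)) (u v : Q) :
    f ⁻¹' (genSubquasigroup mul {f u, f v}) = genSubquasigroup mul {u, v} := by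
  have hf' : ∀ x y, f.symm (mul x y) = mul (f.symm x) (f.symm y) := by
    intro x y
    apply f.injective
    simp [hf]
  ext x
  constructor
  · intro hx P hP
    have := hx (f.symm ⁻¹' P) ⟨sub_preimage f.symm hf' hP.1, by
      rintro y (rfl | rfl)
      · simpa using hP.2 (Or.inl rfl)
      · simpa using hP.2 (Or.inr rfl)⟩
    simpa using this
  · intro hx P hP
    exact hx (f ⁻¹' P) ⟨sub_preimage f hf hP.1, by
      rintro y (rfl | rfl)
      · exact hP.2 (Or.inl rfl)
      · exact hP.2 (Or.inr rfl)⟩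

theorem sub_normal {Q : Type*} (mul : Q → Q → Q) (hQ : IsQuasigroup mul)
    (h : ∀ u v : Q, u ≠ v → IsNormalSubquasigroup mul (genSubquasigroup mul {u, v})) :
    IsHamiltonian mul := by
  intro P hP
  obtain ⟨a, ha⟩ := hP.1
  let s : Q → Q → Prop := fun y z => ∃ r, IsNormalCongruence mul r ∧ (∀ x, r a x → x ∈ P) ∧ r y z
  let R := Relation.ReflTransGen s
  have ssymm : ∀ y z, s y z → s z y := fun y z ⟨r, h1, h2, h3⟩ => ⟨r, h1, h2, h1.1.symm h3⟩
  have Rsymm : ∀ y z, R y z → R z y := fun y z hyz => by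
    induction hyz with
    | refl => exact .refl
    | tail _ h2 ih => exact .head (ssymm _ _ h2) ih
  have mulL : ∀ b y z, R y z → R (mul b y) (mul b z) := fun b y z hyz =>
    rtg_lift (s := s) (fun y => mul b y)
      (fun y z ⟨r, h1, h2, h3⟩ => ⟨r, h1, h2, h1.2.1 _ _ _ _ (h1.1.refl b) h3⟩) hyz
  have mulR : ∀ b y z, R y z → R (mul y b) (mul z b) := fun b y z hyz =>
    rtg_lift (s := s) (fun y => mul y b)
      (fun y z ⟨r, h1, h2, h3⟩ => ⟨r, h1, h2, h1.2.1 _ _ _ _ h3 (h1.1.refl b)⟩) hyz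
  have divL : ∀ b y z, R (mul b y) (mul b z) → R y z := fun b y z hyz => by
    let e := Equiv.ofBijective _ (hQ.2 b).1
    have he : ∀ y, mul b (e.symm y) = y := fun y => e.apply_symm_apply y
    have he' : ∀ y, e.symm (mul b y) = y := fun y => e.symm_apply_apply y
    have := rtg_lift (s := s) (fun y => e.symm y)
      (fun y z ⟨r, h1, h2, h3⟩ => ⟨r, h1, h2, h1.2.2.1 b b _ _ (h1.1.refl b)
        (by rw [he, he]; exact h3)⟩) hyz
    simpa only [he'] using this
  have divR : ∀ b y z, R (mul y b) (mul z b) → R y z := fun b y z hyz => by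
    let e := Equiv.ofBijective _ (hQ.2 b).2
    have he : ∀ y, mul (e.symm y) b = y := fun y => e.apply_symm_apply y
    have he' : ∀ y, e.symm (mul y b) = y := fun y => e.symm_apply_apply y
    have := rtg_lift (s := s) (fun y => e.symm y)
      (fun y z ⟨r, h1, h2, h3⟩ => ⟨r, h1, h2, h1.2.2.2 _ _ b b (h1.1.refl b)
        (by rw [he, he]; exact h3)⟩) hyz
    simpa only [he'] using this
  have step : ∀ y z, s y z → y ∈ P → z ∈ P := by
    rintro y z ⟨r, h1, h2, h3⟩ hy
    obtain ⟨c, hc⟩ := (hQ.2 a).2.2 y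
    obtain ⟨t, ht⟩ := (hQ.2 c).1.2 z
    simp only at hc ht
    have hcP : c ∈ P := (hP.2 a ha y hy).2.2 c hc
    have : r a t := h1.2.2.1 c c _ _ (h1.1.refl c) (by rw [hc, ht]; exact h3)
    rw [← ht]
    exact (hP.2 c hcP t (h2 _ this)).1
  refine ⟨hP, R, ⟨⟨fun _ => .refl, fun h => Rsymm _ _ h, fun h k => .trans h k⟩,
    ?_, ?_, ?_⟩, a, ?_⟩
  · intro a b c d h k
    exact (mulR c _ _ h).trans (mulL b _ _ k)
  · intro a b c d h k
    exact divL b _ _ ((Rsymm _ _ (mulR c _ _ h)).trans k)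
  · intro a b c d h k
    exact divR d _ _ ((Rsymm _ _ (mulL a _ _ h)).trans k)
  · ext x
    constructor
    · intro hx
      by_cases hxa : a = x
      · subst hxa; exact Relation.ReflTransGen.refl
      · obtain ⟨_, r, hr, c, hc⟩ := h a x hxa
        have m1 : r c a := by
          have : a ∈ genSubquasigroup mul {a, x} := fun P hP => hP.2 (Or.inl rfl)
          rw [hc] at this; exact this
        have m2 : r c x := by
          have : x ∈ genSubquasigroup mul {a, x} := fun P hP => hP.2 (Or.inr rfl)
          rw [hc] at this; exact this
        refine Relation.ReflTransGen.single ⟨r, hr, ?_, hr.1.trans (hr.1.symm m1) m2⟩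
        intro y hy
        have : y ∈ genSubquasigroup mul {a, x} := by
          rw [hc]; exact hr.1.trans m1 hy
        exact this P ⟨hP, by rintro z (rfl | rfl) <;> assumption⟩
    · intro (hx : R a x)
      induction hx with
      | refl => exact ha
      | tail _ h2 ih => exact step _ _ h2 ih

/-- For a left distributive quasigroup `Q` and `a ∈ Q`, the following are equivalent:
(i) for every `x ≠ a` the subquasigroup generated by `{a, x}` is normal in `Q`;
(ii) every two-generated subquasigroup of `Q` is normal in `Q`;
(iii) `Q` is hamiltonian. -/
theorem two_generated_normal_tfae {Q : Type*} (mul : Q → Q → Q)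
    (hQ : IsQuasigroup mul)
    (hld : ∀ x a b : Q, mul x (mul a b) = mul (mul x a) (mul x b))
    (a : Q) :
    List.TFAE
      [∀ x : Q, x ≠ a → IsNormalSubquasigroup mul (genSubquasigroup mul {a, x}),
       ∀ u v : Q, u ≠ v → IsNormalSubquasigroup mul (genSubquasigroup mul {u, v}),
       IsHamiltonian mul] := by
  tfae_have 1 → 2 := by
    intro h u v huv
    obtain ⟨c, hc⟩ := (hQ.2 u).2.2 a
    let f := Equiv.ofBijective _ (hQ.2 c).1
    have hfu : f u = a := hc
    have hf : ∀ x y, f (mul x y) = mul (f x) (f y) := fun x y => hld c x y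
    rw [← gen_preimage f hf u v]
    apply normal_preimage f hf
    rw [hfu]
    apply h
    rw [← hfu]
    exact fun e => huv (f.injective e).symm
  tfae_have 2 → 3 := sub_normal mul hQ
  tfae_have 3 → 1 := fun h x _ => h _ (gen_isSub mul _ a (Or.inl rfl))
  tfae_finish
end

section
/- Let Q be a loop (a quasigroup with a two-sided identity element 1) satisfying the identity (x·x)·(a·b) = (x·a)·(x·b) for all x, a, b ∈ Q. Then Q is commutative: a·b = b·a for all a, b ∈ Q. -/
/-- A loop (quasigroup with a two-sided unit) satisfying `(x·x)·(a·b) = (x·a)·(x·b)`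
is commutative. -/
theorem loop_distributive_law_implies_commutative {Q : Type*} (mul : Q → Q → Q)
    (hQ : IsQuasigroup mul) (e : Q)
    (he : ∀ x : Q, mul e x = x ∧ mul x e = x)
    (h : ∀ x a b : Q, mul (mul x x) (mul a b) = mul (mul x a) (mul x b)) :
    ∀ a b : Q, mul a b = mul b a := by
  intro x y
  obtain ⟨b, hb⟩ := ((hQ.2 x).1).2 y
  have hb' : mul x b = y := hb
  have h1 := h x e b
  have h2 := h x b e
  rw [(he b).1, (he x).2, hb'] at h1
  rw [(he b).2, (he x).2, hb'] at h2
  exact h1.symm.trans h2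
end

section
/- Let D₁ = (ℤ/3ℤ)⁴ with the binary operation a△b = (2a₀+2b₀+a₁a₃b₂+2a₂a₃b₁+2a₁b₂b₃+a₂b₁b₃, 2a₁+2b₁, 2a₂+2b₂, 2a₃+2b₃) for a = (a₀,a₁,a₂,a₃) and b = (b₀,b₁,b₂,b₃). Then D₁(△) is a quasigroup of order 81 that is distributive and symmetric (a△b = b△a and a△(a△b) = b for all a, b), but not medial; moreover, the three-element subquasigroup P = {(0,0,0,c) : c ∈ ℤ/3ℤ} is not normal in D₁(△), so D₁(△) is not hamiltonian. -/
/-- The underlying set of the quasigroup `D₁`: `(ℤ/3ℤ)⁴`. -/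
abbrev D₁ : Type := ZMod 3 × ZMod 3 × ZMod 3 × ZMod 3

/-- The operation `△` on `D₁`, where `a = (a₀, a₁, a₂, a₃)`, `b = (b₀, b₁, b₂, b₃)`:
`a△b = (2a₀+2b₀+a₁a₃b₂+2a₂a₃b₁+2a₁b₂b₃+a₂b₁b₃, 2a₁+2b₁, 2a₂+2b₂, 2a₃+2b₃)`. -/
def triangle (a b : D₁) : D₁ :=
  (2 * a.1 + 2 * b.1 + a.2.1 * a.2.2.2 * b.2.2.1 + 2 * a.2.2.1 * a.2.2.2 * b.2.1
      + 2 * a.2.1 * b.2.2.1 * b.2.2.2 + a.2.2.1 * b.2.1 * b.2.2.2,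
   2 * a.2.1 + 2 * b.2.1,
   2 * a.2.2.1 + 2 * b.2.2.1,
   2 * a.2.2.2 + 2 * b.2.2.2)

theorem tri_comm (a b : D₁) : triangle a b = triangle b a := by
  obtain ⟨a0, a1, a2, a3⟩ := a
  obtain ⟨b0, b1, b2, b3⟩ := b
  simp only [triangle, Prod.mk.injEq]
  refine ⟨?_, ?_, ?_, ?_⟩ <;> (rw [← sub_eq_zero]; ring_nf; try reduce_mod_char)

theorem tri_inv (a b : D₁) : triangle a (triangle a b) = b := by
  obtain ⟨a0, a1, a2, a3⟩ := a
  obtain ⟨b0, b1, b2, b3⟩ := b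
  simp only [triangle, Prod.mk.injEq]
  refine ⟨?_, ?_, ?_, ?_⟩ <;> (rw [← sub_eq_zero]; ring_nf; try reduce_mod_char)

theorem tri_dist (x a b : D₁) :
    triangle x (triangle a b) = triangle (triangle x a) (triangle x b) := by
  obtain ⟨a0, a1, a2, a3⟩ := a
  obtain ⟨b0, b1, b2, b3⟩ := b
  obtain ⟨x0, x1, x2, x3⟩ := x
  simp only [triangle, Prod.mk.injEq]
  refine ⟨?_, ?_, ?_, ?_⟩ <;> (rw [← sub_eq_zero]; ring_nf; try reduce_mod_char)

theorem tri_bij (a : D₁) : Function.Bijective (fun x => triangle a x) :=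
  Function.Involutive.bijective (tri_inv a)

theorem tri_sub : IsSubquasigroup triangle {x : D₁ | x.1 = 0 ∧ x.2.1 = 0 ∧ x.2.2.1 = 0} := by
  have key : ∀ a ∈ {x : D₁ | x.1 = 0 ∧ x.2.1 = 0 ∧ x.2.2.1 = 0},
      ∀ b ∈ {x : D₁ | x.1 = 0 ∧ x.2.1 = 0 ∧ x.2.2.1 = 0},
      triangle a b ∈ {x : D₁ | x.1 = 0 ∧ x.2.1 = 0 ∧ x.2.2.1 = 0} := by
    rintro a ⟨h1, h2, h3⟩ b ⟨k1, k2, k3⟩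
    simp [triangle, h1, h2, h3, k1, k2, k3]
  refine ⟨⟨(0, 0, 0, 0), rfl, rfl, rfl⟩, fun a ha b hb => ⟨key a ha b hb, ?_, ?_⟩⟩
  · intro x hx
    have := key a ha b hb
    rwa [← hx, tri_inv] at this
  · intro x hx
    have := key a ha b hb
    rwa [← hx, tri_comm x a, tri_inv] at this

theorem tri_not_normal :
    ¬ IsNormalSubquasigroup triangle {x : D₁ | x.1 = 0 ∧ x.2.1 = 0 ∧ x.2.2.1 = 0} := by
  rintro ⟨-, r, ⟨he, h1, -, -⟩, a, ha⟩
  have m : ∀ x : D₁, (x.1 = 0 ∧ x.2.1 = 0 ∧ x.2.2.1 = 0) ↔ r a x := fun x =>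
    Set.ext_iff.mp ha x
  have hz : r a (0, 0, 0, 0) := (m _).1 ⟨rfl, rfl, rfl⟩
  have hp : r a (0, 0, 0, 1) := (m _).1 ⟨rfl, rfl, rfl⟩
  have h := he.trans (he.symm hz) hp
  have h' := h1 _ _ _ _ (h1 _ _ _ _ (h1 _ _ _ _ h (he.refl (0, 0, 1, 0)))
    (he.refl (0, 1, 0, 0))) (he.refl (0, 1, 2, 0))
  have e1 : triangle (triangle (triangle (0, 0, 0, 0) (0, 0, 1, 0)) (0, 1, 0, 0)) (0, 1, 2, 0)
      = (0, 0, 0, 0) := by decide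
  have e2 : triangle (triangle (triangle (0, 0, 0, 1) (0, 0, 1, 0)) (0, 1, 0, 0)) (0, 1, 2, 0)
      = (1, 0, 0, 2) := by decide
  rw [e1, e2] at h'
  have := ((m _).2 (he.trans hz h')).1
  exact absurd this (by decide)

/-- `D₁(△)` is a distributive symmetric quasigroup of order 81 which is not medial;
the three-element subquasigroup `P = {(0,0,0,c)}` is not normal in it, hence `D₁(△)`
is not hamiltonian. -/
theorem D₁_properties :
    IsQuasigroup triangle ∧
    Nat.card D₁ = 81 ∧
    (∀ x a b : D₁, triangle x (triangle a b) = triangle (triangle x a) (triangle x b)) ∧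
    (∀ x a b : D₁, triangle (triangle a b) x = triangle (triangle a x) (triangle b x)) ∧
    (∀ a b : D₁, triangle a b = triangle b a) ∧
    (∀ a b : D₁, triangle a (triangle a b) = b) ∧
    ¬ (∀ x y u v : D₁, triangle (triangle x y) (triangle u v)
        = triangle (triangle x u) (triangle y v)) ∧
    (IsSubquasigroup triangle {x : D₁ | x.1 = 0 ∧ x.2.1 = 0 ∧ x.2.2.1 = 0} ∧
      ({x : D₁ | x.1 = 0 ∧ x.2.1 = 0 ∧ x.2.2.1 = 0}).ncard = 3 ∧
      ¬ IsNormalSubquasigroup triangle {x : D₁ | x.1 = 0 ∧ x.2.1 = 0 ∧ x.2.2.1 = 0}) ∧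
    ¬ IsHamiltonian triangle := by
  refine ⟨⟨⟨0⟩, fun a => ⟨tri_bij a, ?_⟩⟩, ?_, tri_dist, ?_, tri_comm, tri_inv, ?_,
    ⟨tri_sub, ?_, tri_not_normal⟩, fun h => tri_not_normal (h _ tri_sub)⟩
  · simpa only [tri_comm a] using tri_bij a
  · simp
  · intro x a b
    rw [tri_comm _ x, tri_comm a x, tri_comm b x, tri_dist]
  · intro h
    exact absurd (h (0, 0, 0, 0) (0, 0, 0, 1) (0, 0, 1, 0) (0, 1, 0, 0)) (by decide)
  · have : {x : D₁ | x.1 = 0 ∧ x.2.1 = 0 ∧ x.2.2.1 = 0}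
        = Set.range (fun c : ZMod 3 => ((0, 0, 0, c) : D₁)) := by
      ext ⟨x0, x1, x2, x3⟩
      simp only [Set.mem_ofPred_eq, Set.mem_range, Prod.mk.injEq]
      constructor
      · rintro ⟨rfl, rfl, rfl⟩
        exact ⟨x3, rfl, rfl, rfl, rfl⟩
      · rintro ⟨c, rfl, rfl, rfl, rfl⟩
        exact ⟨rfl, rfl, rfl⟩
    rw [this, ← Nat.card_coe_set_eq, Nat.card_range_of_injective, Nat.card_zmod]
    intro c d h
    simpa using h
end

section
/- Let D₂ = ℤ/27ℤ × ℤ/9ℤ × ℤ/3ℤ with the binary operation a∇b = (26a₀+3a₁+2b₀+24b₁+18a₀a₂b₁+9a₀b₁b₂+18a₁b₀b₂+9a₁a₂b₀, 8a₁+3a₂+2b₁+6b₂, 2a₂+2b₂) for a = (a₀,a₁,a₂) and b = (b₀,b₁,b₂) (where in each mixed term the factors are lifted to integers and the result is reduced in the appropriate component). Then D₂(∇) is a distributive quasigroup of order 729 that is not medial and is hamiltonian. -/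
/-- The underlying set of the quasigroup `D₂`: `ℤ/27ℤ × ℤ/9ℤ × ℤ/3ℤ`. -/
abbrev D₂ : Type := ZMod 27 × ZMod 9 × ZMod 3

/-- The operation `∇` on `D₂`, for `a = (a₀,a₁,a₂)`, `b = (b₀,b₁,b₂)`:
`a∇b = (26a₀+3a₁+2b₀+24b₁+18a₀a₂b₁+9a₀b₁b₂+18a₁b₀b₂+9a₁a₂b₀, 8a₁+3a₂+2b₁+6b₂, 2a₂+2b₂)`,
mixed terms being computed by lifting the components to integers (via `ZMod.val`)
and reducing in the appropriate component. -/
def nabla (a b : D₂) : D₂ :=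
  (26 * a.1 + 3 * (a.2.1.val : ZMod 27) + 2 * b.1 + 24 * (b.2.1.val : ZMod 27)
      + 18 * a.1 * (a.2.2.val : ZMod 27) * (b.2.1.val : ZMod 27)
      + 9 * a.1 * (b.2.1.val : ZMod 27) * (b.2.2.val : ZMod 27)
      + 18 * (a.2.1.val : ZMod 27) * b.1 * (b.2.2.val : ZMod 27)
      + 9 * (a.2.1.val : ZMod 27) * (a.2.2.val : ZMod 27) * b.1,
   8 * a.2.1 + 3 * (a.2.2.val : ZMod 9) + 2 * b.2.1 + 6 * (b.2.2.val : ZMod 9),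
   2 * a.2.2 + 2 * b.2.2)

def D2pi (x y z : ℤ) : D₂ := ((x : ZMod 27), (y : ZMod 9), (z : ZMod 3))

lemma D2pi_surj (a : D₂) : ∃ x y z, a = D2pi x y z := by
  obtain ⟨a, b, c⟩ := a
  obtain ⟨x, rfl⟩ := ZMod.intCast_surjective a
  obtain ⟨y, rfl⟩ := ZMod.intCast_surjective b
  obtain ⟨z, rfl⟩ := ZMod.intCast_surjective c
  exact ⟨x, y, z, rfl⟩

lemma D2pi_congr {x y z x' y' z' : ℤ} (h0 : (x : ZMod 27) = x') (h1 : (y : ZMod 9) = y')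
    (h2 : (z : ZMod 3) = z') : D2pi x y z = D2pi x' y' z' := by
  simp only [D2pi, h0, h1, h2]


lemma D2_val (n m : ℕ) [NeZero n] (x : ℤ) :
    ∃ k : ℤ, (((x : ZMod n).val : ℕ) : ZMod m) = ((x - n * k : ℤ) : ZMod m) := by
  refine ⟨x / n, ?_⟩
  have h : (((x : ZMod n).val : ℕ) : ℤ) = x - n * (x / n) := by
    rw [ZMod.val_intCast, Int.emod_def]
  rw [← h]
  push_cast
  rfl

lemma nabla_D2pi (a0 a1 a2 b0 b1 b2 : ℤ) : nabla (D2pi a0 a1 a2) (D2pi b0 b1 b2) =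
    D2pi (-a0 + 3 * a1 + 2 * b0 - 3 * b1 + 9 * ((a0 * b1 - a1 * b0) * (b2 - a2)))
      (-a1 + 3 * a2 + 2 * b1 - 3 * b2) (-a2 - b2) := by
  obtain ⟨k1, h1⟩ := D2_val 9 27 a1
  obtain ⟨k2, h2⟩ := D2_val 9 27 b1
  obtain ⟨k3, h3⟩ := D2_val 3 27 a2
  obtain ⟨k4, h4⟩ := D2_val 3 27 b2
  obtain ⟨k5, h5⟩ := D2_val 3 9 a2
  obtain ⟨k6, h6⟩ := D2_val 3 9 b2
  simp only [nabla, D2pi, h1, h2, h3, h4, h5, h6]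
  push_cast
  refine Prod.ext ?_ (Prod.ext ?_ ?_)
  · simp only; grind
  · simp only; grind
  · simp only; grind

lemma D2pi_add (a0 a1 a2 b0 b1 b2 : ℤ) :
    D2pi a0 a1 a2 + D2pi b0 b1 b2 = D2pi (a0 + b0) (a1 + b1) (a2 + b2) := by
  simp [D2pi]

lemma D2pi_sub (a0 a1 a2 b0 b1 b2 : ℤ) :
    D2pi a0 a1 a2 - D2pi b0 b1 b2 = D2pi (a0 - b0) (a1 - b1) (a2 - b2) := by
  simp [D2pi]

lemma D2pi_zero : D2pi 0 0 0 = 0 := by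
  simp [D2pi]

lemma nabla_ldist (x a b : D₂) : nabla x (nabla a b) = nabla (nabla x a) (nabla x b) := by
  obtain ⟨x0, x1, x2, rfl⟩ := D2pi_surj x
  obtain ⟨a0, a1, a2, rfl⟩ := D2pi_surj a
  obtain ⟨b0, b1, b2, rfl⟩ := D2pi_surj b
  simp only [nabla_D2pi]
  apply D2pi_congr <;> push_cast <;> grind

lemma nabla_rdist (x a b : D₂) : nabla (nabla a b) x = nabla (nabla a x) (nabla b x) := by
  obtain ⟨x0, x1, x2, rfl⟩ := D2pi_surj x
  obtain ⟨a0, a1, a2, rfl⟩ := D2pi_surj a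
  obtain ⟨b0, b1, b2, rfl⟩ := D2pi_surj b
  simp only [nabla_D2pi]
  apply D2pi_congr <;> push_cast <;> grind

/-- solution of `0 ∇ x = (b0,b1,b2)` -/
lemma nabla_linv (b0 b1 b2 : ℤ) :
    nabla 0 (D2pi (14 * b0 + 14 ^ 2 * 3 * b1 + 14 ^ 3 * 9 * b2) (14 * b1 + 14 ^ 2 * 3 * b2)
      (14 * b2)) = D2pi b0 b1 b2 := by
  rw [← D2pi_zero, nabla_D2pi]
  apply D2pi_congr <;> push_cast <;> grind

lemma nabla_rinv (b0 b1 b2 : ℤ) :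
    nabla (D2pi (-b0 - 3 * b1 - 9 * b2) (-b1 - 3 * b2) (-b2)) 0 = D2pi b0 b1 b2 := by
  rw [← D2pi_zero, nabla_D2pi]
  apply D2pi_congr <;> push_cast <;> grind

lemma nabla_lsurj (a : D₂) : Function.Surjective (fun x => nabla a x) := by
  intro b
  obtain ⟨a0, a1, a2, rfl⟩ := D2pi_surj a
  obtain ⟨b0, b1, b2, rfl⟩ := D2pi_surj b
  obtain ⟨e2, h2⟩ : ∃ e2, e2 = b2 + a2 := ⟨_, rfl⟩
  obtain ⟨e1, h1⟩ : ∃ e1, e1 = b1 + a1 - 3 * a2 := ⟨_, rfl⟩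
  obtain ⟨e0, h0⟩ : ∃ e0, e0 = b0 + a0 - 3 * a1
    - 9 * ((a0 * (-(a1 + b1)) - a1 * (-(a0 + b0))) * (-(a2 + b2) - a2)) := ⟨_, rfl⟩
  refine ⟨D2pi (14 * e0 + 14 ^ 2 * 3 * e1 + 14 ^ 3 * 9 * e2) (14 * e1 + 14 ^ 2 * 3 * e2)
      (14 * e2), ?_⟩
  simp only [nabla_D2pi]
  apply D2pi_congr <;> subst h0 h1 h2 <;> push_cast <;> grind

lemma nabla_rsurj (a : D₂) : Function.Surjective (fun x => nabla x a) := by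
  intro b
  obtain ⟨a0, a1, a2, rfl⟩ := D2pi_surj a
  obtain ⟨b0, b1, b2, rfl⟩ := D2pi_surj b
  obtain ⟨e2, h2⟩ : ∃ e2, e2 = b2 + a2 := ⟨_, rfl⟩
  obtain ⟨e1, h1⟩ : ∃ e1, e1 = b1 - 2 * a1 + 3 * a2 := ⟨_, rfl⟩
  obtain ⟨e0, h0⟩ : ∃ e0, e0 = b0 - 2 * a0 + 3 * a1
    - 9 * (((-(a0 + b0)) * a1 - (-(a1 + b1)) * a0) * (a2 + (a2 + b2))) := ⟨_, rfl⟩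
  refine ⟨D2pi (-e0 - 3 * e1 - 9 * e2) (-e1 - 3 * e2) (-e2), ?_⟩
  simp only [nabla_D2pi]
  apply D2pi_congr <;> subst h0 h1 h2 <;> push_cast <;> grind

lemma nabla_lbij (a : D₂) : Function.Bijective (fun x => nabla a x) :=
  (nabla_lsurj a).bijective_of_finite

lemma nabla_rbij (a : D₂) : Function.Bijective (fun x => nabla x a) :=
  (nabla_rsurj a).bijective_of_finite

lemma D2_cancel {Q : Type*} [Finite Q] {r : Q → Q → Prop} (hr : Equivalence r) {f : Q → Q}
    (hf : Function.Surjective f) (hc : ∀ x y, r x y → r (f x) (f y)) {x y : Q}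
    (h : r (f x) (f y)) : r x y := by
  let s : Setoid Q := ⟨r, hr⟩
  let g : Quotient s → Quotient s := Quotient.map f (fun a b hab => hc a b hab)
  have gs : Function.Surjective g := by
    intro q
    induction q using Quotient.inductionOn with
    | h q =>
      obtain ⟨p, rfl⟩ := hf q
      exact ⟨Quotient.mk s p, rfl⟩
  have gi : Function.Injective g := Finite.injective_iff_surjective.mpr gs
  have : g (Quotient.mk s x) = g (Quotient.mk s y) := Quotient.sound (s := s) h
  exact Quotient.exact (gi this)

lemma D2_A {P : Set D₂} (hP : IsSubquasigroup nabla P) (h0 : (0 : D₂) ∈ P)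
    {x0 x1 x2 y0 y1 y2 : ℤ} (hx : D2pi x0 x1 x2 ∈ P) (hy : D2pi y0 y1 y2 ∈ P) :
    D2pi (x0 + y0 + 9 * ((x0 * y1 - x1 * y0) * (x2 - y2))) (x1 + y1) (x2 + y2) ∈ P := by
  have h1 := (hP.2 _ h0 _ hx).2.2 _ (nabla_rinv x0 x1 x2)
  have h2 := (hP.2 _ h0 _ hy).2.1 _ (nabla_linv y0 y1 y2)
  have h3 := (hP.2 _ h1 _ h2).1
  rw [nabla_D2pi] at h3
  convert h3 using 1
  apply D2pi_congr <;> push_cast <;> grind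

lemma D2_N {P : Set D₂} (hP : IsSubquasigroup nabla P) (h0 : (0 : D₂) ∈ P)
    {x0 x1 x2 : ℤ} (hx : D2pi x0 x1 x2 ∈ P) : D2pi (3 * x1) (3 * x2) 0 ∈ P := by
  have h1 := (hP.2 _ hx _ h0).1
  rw [← D2pi_zero, nabla_D2pi] at h1
  have h2 := D2_A hP h0 h1 hx
  convert h2 using 1
  apply D2pi_congr <;> push_cast <;> grind

lemma D2_three {P : Set D₂} (hP : IsSubquasigroup nabla P) (h0 : (0 : D₂) ∈ P)
    {x0 x1 x2 : ℤ} (hx : D2pi x0 x1 x2 ∈ P) : D2pi (3 * x0) (3 * x1) 0 ∈ P := by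
  have h2 := D2_A hP h0 (D2_A hP h0 hx hx) hx
  convert h2 using 1
  apply D2pi_congr <;> push_cast <;> grind

lemma D2_Z {P : Set D₂} (hP : IsSubquasigroup nabla P) (h0 : (0 : D₂) ∈ P)
    {m : ℤ} (hm : ¬ 3 ∣ m) (hx : D2pi (9 * m) 0 0 ∈ P) (k : ℤ) : D2pi (9 * k) 0 0 ∈ P := by
  have h2 := D2_A hP h0 hx hx
  have key : ∃ q, k = 3 * q ∨ k = m + 3 * q ∨ k = m + m + 3 * q := by
    have : 3 ∣ k ∨ 3 ∣ k - m ∨ 3 ∣ k - m - m := by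
      rcases (by omega : k % 3 = 0 ∨ k % 3 = 1 ∨ k % 3 = 2) with h | h | h <;>
      rcases (by omega : m % 3 = 1 ∨ m % 3 = 2) with h' | h' <;> omega
    rcases this with ⟨q, h⟩ | ⟨q, h⟩ | ⟨q, h⟩
    · exact ⟨q, by omega⟩
    · exact ⟨q, by omega⟩
    · exact ⟨q, by omega⟩
  obtain ⟨q, rfl | rfl | rfl⟩ := key
  · rw [← D2pi_zero] at h0
    convert h0 using 1
    apply D2pi_congr <;> push_cast <;> grind
  · convert hx using 1
    apply D2pi_congr <;> push_cast <;> grind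
  · convert h2 using 1
    apply D2pi_congr <;> push_cast <;> grind

lemma D2_dich {P : Set D₂} (hP : IsSubquasigroup nabla P) (h0 : (0 : D₂) ∈ P) :
    (∀ x0 x1 x2 t : ℤ, D2pi x0 x1 x2 ∈ P → D2pi (x0 + 9 * t) x1 x2 ∈ P) ∨
    (∀ x0 x1 x2 : ℤ, D2pi x0 x1 x2 ∈ P → 3 ∣ x0 ∧ 3 ∣ x1 ∧ 3 ∣ x2) := by
  by_cases hc : ∀ x0 x1 x2 : ℤ, D2pi x0 x1 x2 ∈ P → 3 ∣ x0 ∧ 3 ∣ x1 ∧ 3 ∣ x2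
  · exact Or.inr hc
  left
  have hZ : ∀ k, D2pi (9 * k) 0 0 ∈ P := by
    push Not at hc
    obtain ⟨x0, x1, x2, hx, hn⟩ := hc
    by_cases g2 : 3 ∣ x2
    · obtain ⟨w, rfl⟩ := g2
      by_cases g1 : 3 ∣ x1
      · obtain ⟨v, rfl⟩ := g1
        have g0 : ¬ 3 ∣ x0 := fun h => hn h ⟨v, rfl⟩ ⟨w, rfl⟩
        refine D2_Z hP h0 g0 ?_
        have := D2_three hP h0 (D2_three hP h0 hx)
        convert this using 1
        apply D2pi_congr <;> push_cast <;> grind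
      · refine D2_Z hP h0 g1 ?_
        have := D2_three hP h0 (D2_N hP h0 hx)
        convert this using 1
        apply D2pi_congr <;> push_cast <;> grind
    · refine D2_Z hP h0 g2 ?_
      have := D2_N hP h0 (D2_N hP h0 hx)
      convert this using 1
      apply D2pi_congr <;> push_cast <;> grind
  intro x0 x1 x2 t hx
  have := D2_A hP h0 hx (hZ t)
  convert this using 1
  apply D2pi_congr <;> push_cast <;> grind

lemma D2_add {P : Set D₂} (hP : IsSubquasigroup nabla P) (h0 : (0 : D₂) ∈ P)
    {x y : D₂} (hx : x ∈ P) (hy : y ∈ P) : x + y ∈ P := by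
  obtain ⟨x0, x1, x2, rfl⟩ := D2pi_surj x
  obtain ⟨y0, y1, y2, rfl⟩ := D2pi_surj y
  have h1 := D2_A hP h0 hx hy
  rw [D2pi_add]
  rcases D2_dich hP h0 with h | h
  · have h2 := h _ _ _ (-((x0 * y1 - x1 * y0) * (x2 - y2))) h1
    convert h2 using 1
    apply D2pi_congr <;> push_cast <;> ring
  · obtain ⟨⟨u0, rfl⟩, ⟨u1, rfl⟩, ⟨u2, rfl⟩⟩ := h _ _ _ hx
    convert h1 using 1
    apply D2pi_congr <;> push_cast <;> grind

lemma D2_neg {P : Set D₂} (hP : IsSubquasigroup nabla P) (h0 : (0 : D₂) ∈ P)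
    {x : D₂} (hx : x ∈ P) : -x ∈ P := by
  have h : ∀ n : ℕ, n • x ∈ P := by
    intro n
    induction n with
    | zero => simpa using h0
    | succ n ih => rw [succ_nsmul]; exact D2_add hP h0 ih hx
  have e : -x = 26 • x := by
    clear h hx
    obtain ⟨a, b, c⟩ := x
    refine Prod.ext ?_ (Prod.ext ?_ ?_)
    · exact (by decide : ∀ a : ZMod 27, -a = 26 • a) a
    · exact (by decide : ∀ b : ZMod 9, -b = 26 • b) b
    · exact (by decide : ∀ c : ZMod 3, -c = 26 • c) c
  rw [e]
  exact h 26

lemma D2_cong {P : Set D₂} (hP : IsSubquasigroup nabla P) (h0 : (0 : D₂) ∈ P) :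
    IsNormalCongruence nabla (fun x y => y - x ∈ P) := by
  have heq : Equivalence (fun x y : D₂ => y - x ∈ P) := by
    refine ⟨fun x => by simpa using h0, fun {x y} h => ?_, fun {x y z} h1 h2 => ?_⟩
    · have := D2_neg hP h0 h
      simpa using this
    · have := D2_add hP h0 h1 h2
      simpa using this
  have c1 : ∀ a b c d : D₂, b - a ∈ P → d - c ∈ P → nabla b d - nabla a c ∈ P := by
    intro a b c d hp hq
    obtain ⟨p, hp'⟩ : ∃ p, p = b - a := ⟨_, rfl⟩
    obtain ⟨q, hq'⟩ : ∃ q, q = d - c := ⟨_, rfl⟩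
    rw [← hp'] at hp
    rw [← hq'] at hq
    obtain rfl : b = a + p := by rw [hp']; abel
    obtain rfl : d = c + q := by rw [hq']; abel
    clear hp' hq'
    obtain ⟨a0, a1, a2, rfl⟩ := D2pi_surj a
    obtain ⟨b0, b1, b2, rfl⟩ := D2pi_surj c
    obtain ⟨p0, p1, p2, rfl⟩ := D2pi_surj p
    obtain ⟨q0, q1, q2, rfl⟩ := D2pi_surj q
    have h1 := (hP.2 _ hp _ hq).1
    rw [nabla_D2pi] at h1
    rw [D2pi_add, D2pi_add, nabla_D2pi, nabla_D2pi, D2pi_sub]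
    rcases D2_dich hP h0 with h | h
    · have h2 := h _ _ _ ((((a0 + p0) * (b1 + q1) - (a1 + p1) * (b0 + q0)) *
        ((b2 + q2) - (a2 + p2))) - (a0 * b1 - a1 * b0) * (b2 - a2)
        - (p0 * q1 - p1 * q0) * (q2 - p2)) h1
      convert h2 using 1
      apply D2pi_congr <;> push_cast <;> ring
    · obtain ⟨⟨u0, rfl⟩, ⟨u1, rfl⟩, ⟨u2, rfl⟩⟩ := h _ _ _ hp
      obtain ⟨⟨v0, rfl⟩, ⟨v1, rfl⟩, ⟨v2, rfl⟩⟩ := h _ _ _ hq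
      convert h1 using 1
      apply D2pi_congr <;> push_cast <;> grind
  refine ⟨heq, c1, ?_, ?_⟩
  · intro a b c d hab h
    refine D2_cancel heq (nabla_lsurj b) (fun x y hxy => c1 b b x y (heq.refl b) hxy) ?_
    exact heq.trans (heq.symm (c1 a b c c hab (heq.refl c))) h
  · intro a b c d hcd h
    refine D2_cancel heq (nabla_rsurj d) (fun x y hxy => c1 x y d d hxy (heq.refl d)) ?_
    exact heq.trans (heq.symm (c1 a a c d (heq.refl a) hcd)) h

lemma D2_ham : IsHamiltonian nabla := by
  intro P hP
  refine ⟨hP, ?_⟩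
  obtain ⟨c, hc⟩ := hP.1
  obtain ⟨e, he⟩ := nabla_rsurj c 0
  simp only at he
  have inj : Function.Injective (fun x => nabla e x) := (nabla_lbij e).1
  have hP' : IsSubquasigroup nabla ((fun x => nabla e x) '' P) := by
    refine ⟨⟨_, c, hc, rfl⟩, ?_⟩
    rintro _ ⟨a, ha, rfl⟩ _ ⟨b, hb, rfl⟩
    refine ⟨⟨nabla a b, (hP.2 a ha b hb).1, nabla_ldist e a b⟩, ?_, ?_⟩
    · intro x hx
      obtain ⟨x, rfl⟩ := nabla_lsurj e x
      simp only [← nabla_ldist] at hx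
      exact ⟨x, (hP.2 a ha b hb).2.1 x (inj hx), rfl⟩
    · intro x hx
      obtain ⟨x, rfl⟩ := nabla_lsurj e x
      simp only [← nabla_ldist] at hx
      exact ⟨x, (hP.2 a ha b hb).2.2 x (inj hx), rfl⟩
  have h0 : (0 : D₂) ∈ (fun x => nabla e x) '' P := ⟨c, hc, he⟩
  obtain ⟨r0, r1, r2, r3⟩ := D2_cong hP' h0
  refine ⟨fun x y => nabla e y - nabla e x ∈ (fun x => nabla e x) '' P,
    ⟨⟨fun x => r0.refl _, fun h => r0.symm h, fun h h' => r0.trans h h'⟩, ?_, ?_, ?_⟩, c, ?_⟩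
  · intro a b u v h h'
    rw [nabla_ldist e a u, nabla_ldist e b v]
    exact r1 _ _ _ _ h h'
  · intro a b u v h h'
    rw [nabla_ldist e a u, nabla_ldist e b v] at h'
    exact r2 _ _ _ _ h h'
  · intro a b u v h h'
    rw [nabla_ldist e a u, nabla_ldist e b v] at h'
    exact r3 _ _ _ _ h h'
  · ext x
    rw [Set.mem_ofPred_eq]
    beta_reduce
    rw [he, sub_zero]
    exact (inj.mem_set_image (s := P) (a := x)).symm

/-- `D₂(∇)` is a distributive quasigroup of order 729 that is not medial and is
hamiltonian. -/
theorem D₂_properties :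
    IsQuasigroup nabla ∧
    Nat.card D₂ = 729 ∧
    (∀ x a b : D₂, nabla x (nabla a b) = nabla (nabla x a) (nabla x b)) ∧
    (∀ x a b : D₂, nabla (nabla a b) x = nabla (nabla a x) (nabla b x)) ∧
    ¬ (∀ x y u v : D₂, nabla (nabla x y) (nabla u v) = nabla (nabla x u) (nabla y v)) ∧
    IsHamiltonian nabla := by
  refine ⟨⟨⟨0⟩, fun a => ⟨nabla_lbij a, nabla_rbij a⟩⟩, ?_, nabla_ldist, nabla_rdist, ?_, D2_ham⟩
  · rw [Nat.card_prod, Nat.card_prod, Nat.card_zmod, Nat.card_zmod, Nat.card_zmod]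
  · intro h
    have := h (1, 0, 0) (0, 1, 0) (0, 0, 1) (0, 0, 0)
    revert this
    decide
end

section
/- Every non-medial hamiltonian distributive quasigroup has at least 729 elements; equivalently, every hamiltonian distributive quasigroup with fewer than 729 elements is medial. -/
universe u
/-- commutative loop structure of a distributive quasigroup -/
class DQ (Q : Type*) extends Add Q, Zero Q, Neg Q where
  ph : Q → Q
  ps : Q → Q
  comm : ∀ x y : Q, x + y = y + x
  zadd : ∀ x : Q, 0 + x = x
  nadd : ∀ x y : Q, -x + (x + y) = y
  phadd : ∀ x y : Q, ph (x + y) = ph x + ph y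
  phps : ∀ x : Q, ph x + ps x = x
  auto : ∀ x a b : Q, x + (a + b) = (ph x + a) + (ps x + b)

namespace DQ

section basic
variable {Q : Type*} [DQ Q]

theorem addz (x : Q) : x + 0 = x := by rw [comm, zadd]

theorem canc {x a b : Q} (h : x + a = x + b) : a = b := by
  rw [← nadd x a, h, nadd]

theorem addn (x : Q) : x + -x = 0 := by
  have := nadd x 0
  rw [addz] at this
  rw [comm, this]

theorem nn (x : Q) : - -x = x := by
  apply canc (x := -x)
  rw [addn, comm, addn]

theorem addn' (x y : Q) : x + (-x + y) = y := by
  have := nadd (-x) y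
  rwa [nn] at this

theorem nz : -(0:Q) = 0 := by
  have := addn (0:Q)
  rwa [zadd] at this

theorem negadd (x y : Q) : -(x + y) = -x + -y := by
  have h1 : -(x+y) + x = -y := by
    have := nadd (x+y) (-y)
    rwa [comm (x+y) (-y), comm x y, nadd, comm y x] at this
  have h2 := nadd x (-(x+y))
  rw [comm x, h1] at h2
  exact h2.symm

theorem pp (x b : Q) : ph x + (ps x + b) = x + b := by
  have := auto x 0 b
  rw [zadd, addz] at this
  exact this.symm

theorem pp' (x b : Q) : ps x + (ph x + b) = x + b := by
  have := auto x b 0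
  rw [addz, addz] at this
  rw [this, comm]

theorem auto' (x a b : Q) : x + (a + b) = (ps x + a) + (ph x + b) := by
  rw [comm a b, auto, comm]

theorem M (x a b : Q) : x + (x + (a + b)) = (x + a) + (x + b) := by
  rw [auto x a b, auto' x, pp, pp']

/-- x+(c+d) = (2x+c) + (-x+d) -/
theorem M2 (x c d : Q) : x + (c + d) = (x + (x + c)) + (-x + d) := by
  have := M x (c + d) (-d)
  rw [comm c d, comm (d + c) (-d), nadd] at this
  rw [this, comm c d]
  have h2 : -x + d = -(x + -d) := by rw [negadd, nn]
  rw [h2, comm _ (-(x + -d)), comm (x + (d + c)) (x + -d), nadd]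

theorem dbl (x d : Q) : x + (x + d) = (x + x) + d := by
  have := M2 x 0 (x + d)
  rw [zadd, addz, nadd] at this
  exact this

def IsC (z : Q) : Prop := ∀ a b : Q, z + (a + b) = (z + a) + b

theorem three_aux (x a b : Q) : x + (x + (x + (a + b))) = (x + (x + (x + a))) + b := by
  rw [M x a b, M2 x, nadd]

theorem three_aux2 (x b : Q) : x + (x + (x + b)) = (x + (x + x)) + b := by
  have := three_aux x 0 b
  rwa [zadd, addz] at this

theorem three_c (x : Q) : IsC (x + (x + x)) := by
  intro a b
  rw [← three_aux2, ← three_aux2, three_aux]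

theorem T_aux (x a b : Q) : x + (ph x + (a + b)) = (x + (ph x + a)) + b := by
  rw [M2 (ph x) a b, auto' x, addn', pp']

theorem T_aux2 (x b : Q) : x + (ph x + b) = (x + ph x) + b := by
  have := T_aux x 0 b
  rwa [zadd, addz] at this

theorem T_c (x : Q) : IsC (x + ph x) := by
  intro a b
  rw [← T_aux2, ← T_aux2, T_aux]

variable (Q) in
/-- the centre -/
@[ext] structure Zc where
  val : Q
  prop : IsC val

theorem zc (z : Zc Q) (a b : Q) : (z.1 + a) + b = z.1 + (a + b) := (z.2 a b).symm

theorem zl (z : Zc Q) (a b : Q) : a + (z.1 + b) = z.1 + (a + b) := by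
  rw [comm a, zc, comm b]

instance : Zero (Zc Q) := ⟨⟨0, fun a b => by rw [zadd, zadd]⟩⟩
instance : Add (Zc Q) := ⟨fun x y => ⟨x.1 + y.1, fun a b => by rw [zc, zc, zc, zc]⟩⟩
instance : Neg (Zc Q) := ⟨fun x => ⟨-x.1, fun a b => by
    apply canc (x := x.1)
    rw [addn', ← zc, addn']⟩⟩

instance : AddCommGroup (Zc Q) where
  add_assoc x y z := Zc.ext (zc x y.1 z.1)
  zero_add x := Zc.ext (zadd x.1)
  add_zero x := Zc.ext (addz x.1)
  add_comm x y := Zc.ext (comm x.1 y.1)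
  neg_add_cancel x := Zc.ext (by
    show -x.1 + x.1 = 0
    rw [comm, addn])
  nsmul := nsmulRec
  zsmul := zsmulRec

theorem cadd (x y : Zc Q) : (x + y).1 = x.1 + y.1 := rfl
theorem cneg (x : Zc Q) : (-x).1 = -x.1 := rfl
theorem czero : (0 : Zc Q).1 = 0 := rfl

theorem zz (z w : Zc Q) (a b : Q) : (z.1 + a) + (w.1 + b) = (z + w).1 + (a + b) := by
  rw [zl, zc, cadd, ← zc, comm w.1]

theorem zcanc {z w : Zc Q} {a : Q} (h : z.1 + a = w.1 + a) : z = w := by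
  apply Zc.ext
  apply canc (x := a)
  rw [comm, h, comm]

/-- additive maps into the centre -/
def IsAdd (F : Q → Zc Q) : Prop := ∀ x y, F (x + y) = F x + F y

theorem IsAdd.zero {F : Q → Zc Q} (h : IsAdd F) : F 0 = 0 := by
  have := h 0 0
  rw [zadd] at this
  simpa using this

theorem IsAdd.neg {F : Q → Zc Q} (h : IsAdd F) (x : Q) : F (-x) = - F x := by
  have := h x (-x)
  rw [addn, h.zero] at this
  exact (neg_eq_of_add_eq_zero_right this.symm).symm

def T (x : Q) : Zc Q := ⟨x + ph x, T_c x⟩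
def three (x : Q) : Zc Q := ⟨x + (x + x), three_c x⟩

theorem ph_eq (x : Q) : ph x = (T x).1 + -x := by
  show ph x = (x + ph x) + -x
  rw [comm _ (-x), nadd]

theorem T_add : IsAdd (T : Q → Zc Q) := by
  intro x y
  apply zcanc (a := -(x + y))
  rw [← ph_eq, phadd, ph_eq x, ph_eq y, zz, negadd]

theorem three_add : IsAdd (three : Q → Zc Q) := by
  intro x y
  apply Zc.ext
  show (x + y) + ((x + y) + (x + y)) = (x + (x + x)) + (y + (y + y))
  rw [← M x y y, dbl x (y + y)]
  have h := M2 x (y + y) (x + (x + y))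
  rw [nadd, dbl x (y + y)] at h
  rw [comm (x + y), ← h, ← dbl y, dbl x y, comm (x + x) y, three_aux2 y]
  have := zl (three y) x (x + x)
  simp only [three] at this
  rw [this, comm]

theorem three_z (z : Zc Q) : three z.1 = (3:ℕ) • z := by
  apply Zc.ext
  rw [show (3:ℕ) • z = z + (z + z) by abel]
  rfl

def t : Zc Q →+ Zc Q where
  toFun z := T z.1
  map_zero' := T_add.zero
  map_add' x y := T_add x.1 y.1

theorem t_three (x : Q) : t (three x) = (3:ℕ) • T x := by
  show T (x + (x + x)) = _
  rw [T_add, T_add]; abel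

theorem exists_comb1 (m : ℤ) (a : Q) : ∃ x : Q, ∀ F : Q → Zc Q, IsAdd F → F x = m • F a := by
  induction m using Int.induction_on with
  | zero => exact ⟨0, fun F h => by rw [h.zero]; simp⟩
  | succ n ih =>
    obtain ⟨x, hx⟩ := ih
    exact ⟨x + a, fun F h => by rw [h, hx F h, add_smul, one_smul]⟩
  | pred n ih =>
    obtain ⟨x, hx⟩ := ih
    exact ⟨x + -a, fun F h => by rw [h, hx F h, h.neg, sub_smul, one_smul, sub_eq_add_neg]⟩

theorem exists_comb (m : Fin 3 → ℤ) (a : Fin 3 → Q) :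
    ∃ x : Q, ∀ F : Q → Zc Q, IsAdd F → F x = ∑ i, m i • F (a i) := by
  obtain ⟨x, hx⟩ := exists_comb1 (m 0) (a 0)
  obtain ⟨y, hy⟩ := exists_comb1 (m 1) (a 1)
  obtain ⟨w, hw⟩ := exists_comb1 (m 2) (a 2)
  exact ⟨x + y + w, fun F h => by rw [h, h, hx F h, hy F h, hw F h, Fin.sum_univ_three]⟩

/-- the hamiltonian property in loop form -/
def Ham (Q : Type*) [DQ Q] : Prop :=
  ∀ P : Set Q, 0 ∈ P → (∀ p ∈ P, ∀ q ∈ P, p + q ∈ P) → (∀ p ∈ P, -p ∈ P) →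
    (∀ p ∈ P, ph p ∈ P) →
    ∃ r : Q → Q → Prop, Equivalence r ∧ (∀ a b c d, r a b → r c d → r (a + c) (b + d)) ∧
      ∀ x, x ∈ P ↔ r 0 x

def PN (N : AddSubgroup (Zc Q)) (x : Q) : Set Q :=
  {p | ∃ n ∈ N, p = n.1 ∨ p = n.1 + x ∨ p = n.1 + -x}

theorem PN_neg {N : AddSubgroup (Zc Q)} {x p : Q} (hp : p ∈ PN N x) : -p ∈ PN N x := by
  obtain ⟨n, hn, h⟩ := hp
  refine ⟨-n, N.neg_mem hn, ?_⟩
  rcases h with rfl | rfl | rfl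
  · exact Or.inl rfl
  · right; right; rw [negadd]; rfl
  · right; left; rw [negadd, nn]; rfl

theorem xx (x : Q) : x + x = (three x).1 + -x := by
  show _ = (x + (x + x)) + -x
  rw [comm _ (-x), nadd]

theorem PN_addn {N : AddSubgroup (Zc Q)} {x p : Q} (hp : p ∈ PN N x) {m : Zc Q} (hm : m ∈ N) :
    m.1 + p ∈ PN N x := by
  obtain ⟨n, hn, h⟩ := hp
  refine ⟨m + n, N.add_mem hm hn, ?_⟩
  rcases h with rfl | rfl | rfl
  · exact Or.inl rfl
  · right; left; rw [cadd, zc]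
  · right; right; rw [cadd, zc]

theorem PN_addx {N : AddSubgroup (Zc Q)} {x p : Q} (h3 : three x ∈ N) (hp : p ∈ PN N x) :
    x + p ∈ PN N x := by
  obtain ⟨n, hn, h⟩ := hp
  rcases h with rfl | rfl | rfl
  · exact ⟨n, hn, by right; left; rw [comm]⟩
  · rw [zl, xx]
    exact PN_addn ⟨three x, h3, by right; right; rfl⟩ hn
  · rw [zl, addn, addz]
    exact ⟨n, hn, Or.inl rfl⟩

theorem PN_add {N : AddSubgroup (Zc Q)} {x p q : Q} (h3 : three x ∈ N) (hp : p ∈ PN N x)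
    (hq : q ∈ PN N x) : p + q ∈ PN N x := by
  obtain ⟨n, hn, h⟩ := hp
  rcases h with rfl | rfl | rfl
  · exact PN_addn hq hn
  · rw [zc]; exact PN_addn (PN_addx h3 hq) hn
  · rw [zc]; refine PN_addn ?_ hn
    have := PN_neg (PN_addx h3 (PN_neg hq))
    rwa [negadd, nn] at this

theorem PN_ph {N : AddSubgroup (Zc Q)} {x p : Q} (ht : ∀ n ∈ N, t n ∈ N) (hT : T x ∈ N)
    (hp : p ∈ PN N x) : ph p ∈ PN N x := by
  rw [ph_eq]
  refine PN_addn (PN_neg hp) ?_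
  obtain ⟨n, hn, h⟩ := hp
  rcases h with rfl | rfl | rfl
  · exact ht n hn
  · rw [T_add]; exact N.add_mem (ht n hn) hT
  · rw [T_add, T_add.neg]; exact N.add_mem (ht n hn) (N.neg_mem hT)

/-- raw associator -/
def as (x y w : Q) : Q := -(x + (y + w)) + ((x + y) + w)

theorem as_spec (x y w : Q) : (x + y) + w = (x + (y + w)) + as x y w := by
  rw [as, addn']

theorem PN_zero {N : AddSubgroup (Zc Q)} {x : Q} : (0:Q) ∈ PN N x :=
  ⟨0, N.zero_mem, Or.inl rfl⟩

theorem PN_self {N : AddSubgroup (Zc Q)} {x : Q} : x ∈ PN N x :=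
  ⟨0, N.zero_mem, by right; left; rw [czero, zadd]⟩

theorem ham1 (ham : Ham Q) (N : AddSubgroup (Zc Q)) (ht : ∀ n ∈ N, t n ∈ N) (x : Q)
    (h3 : three x ∈ N) (hT : T x ∈ N) (y w : Q) :
    as x y w ∈ PN N x ∧ as y w x ∈ PN N x := by
  obtain ⟨r, he, hr, hP⟩ := ham (PN N x) PN_zero (fun p hp q hq => PN_add h3 hp hq)
    (fun p hp => PN_neg hp) (fun p hp => PN_ph ht hT hp)
  have h0 : r 0 x := (hP x).1 PN_self
  have key : ∀ a b, r a b → r 0 (-a + b) := by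
    intro a b h
    have := hr _ _ _ _ (he.refl (-a)) h
    rwa [comm (-a) a, addn] at this
  constructor
  · rw [hP]
    apply key
    have h1 := hr _ _ _ _ (hr _ _ _ _ h0 (he.refl y)) (he.refl w)
    have h2 := hr _ _ _ _ h0 (he.refl (y + w))
    rw [zadd] at h1 h2
    exact he.trans (he.symm h2) h1
  · rw [hP]
    apply key
    have h1 := hr _ _ _ _ (he.refl (y + w)) h0
    have h2 := hr _ _ _ _ (he.refl y) (hr _ _ _ _ (he.refl w) h0)
    rw [addz] at h1 h2
    exact he.trans (he.symm h2) h1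

theorem as_zero_of {x y w : Q} (h : (x + y) + w = x + (y + w)) : as x y w = 0 := by
  rw [as, h, comm, addn]

theorem isC_zero : IsC (0:Q) := (0 : Zc Q).2

theorem as_c1 (z : Zc Q) (y w : Q) : as z.1 y w = 0 := as_zero_of (zc _ _ _)

theorem as_c (ham : Ham Q) (x y w : Q) : IsC (as x y w) := by
  obtain ⟨n, -, h⟩ := (ham1 ham ⊤ (by simp) x (by simp) (by simp) y w).1
  obtain ⟨m, -, h'⟩ := (ham1 ham ⊤ (by simp) w (by simp) (by simp) x y).2
  -- x ∈ ± w + Z or trivial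
  have fin : ∀ k : Zc Q, (x = k.1 ∨ x = k.1 + w ∨ x = k.1 + -w) → IsC (as x y w) := by
    intro k hk
    have : as x y w = 0 := by
      apply as_zero_of
      rcases hk with rfl | rfl | rfl
      · rw [zc]
      · rw [zc, zc, zc, comm (w + y), comm y w]
      · rw [zc, zc, zc, comm y w, nadd, comm (-w + y), addn']
    rw [this]; exact isC_zero
  rcases h with h | h | h
  · rw [h]; exact n.2
  · have hx : x = (-n).1 + as x y w := by rw [h, cneg, nadd]
    rcases h' with h' | h' | h'
    · rw [h']; exact m.2
    · exact fin (-n + m) (by right; left; rw [cadd, zc, ← h']; exact hx)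
    · exact fin (-n + m) (by right; right; rw [cadd, zc, ← h']; exact hx)
  · have hx : x = n.1 + -as x y w := by rw [h, negadd, nn, addn']
    rcases h' with h' | h' | h'
    · rw [h']; exact m.2
    · exact fin (n + -m) (by right; right; rw [cadd, zc, cneg, ← negadd, ← h']; exact hx)
    · refine fin (n + -m) (by right; left; rw [cadd, zc, cneg, ← nn w, ← negadd, ← h']; exact hx)

def A (ham : Ham Q) (x y w : Q) : Zc Q := ⟨as x y w, as_c ham x y w⟩

theorem A_spec (ham : Ham Q) (x y w : Q) : (x + y) + w = (A ham x y w).1 + (x + (y + w)) := by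
  rw [comm (A ham x y w).1]; exact as_spec x y w

theorem A_add (ham : Ham Q) (y w : Q) : IsAdd (fun x => A ham x y w) := by
  have th : ∀ x, (x + y) + w = (y + w) + ((A ham x y w).1 + x) := by
    intro x
    rw [A_spec ham, zl, comm x]
  have h1 : ∀ a b, w + (w + (y + (y + (a + b)))) =
      (y + w) + ((y + w) + (((A ham a y w).1 + a) + ((A ham b y w).1 + b))) := by
    intro a b
    rw [M y, M w, M (y + w), ← th, ← th, comm w, comm w, comm y, comm y]
  have h00 : (A ham 0 y w).1 = 0 := as_c1 0 y w
  intro a b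
  have h2 := h1 (a + b) 0
  rw [addz, h1 a b, h00, addz, addz] at h2
  have h3 := canc (canc h2)
  rw [zz] at h3
  exact (zcanc h3).symm

theorem A_rev (ham : Ham Q) (x y w : Q) : A ham x y w = - A ham w y x := by
  have h1 := A_spec ham x y w
  have h2 := A_spec ham w y x
  rw [comm _ x, comm w y, comm w, comm y x, h1, ← zc, ← cadd] at h2
  have h3 : (0 : Zc Q).1 + (x + (y + w)) = (A ham w y x + A ham x y w).1 + (x + (y + w)) := by
    rw [czero, zadd]; exact h2
  exact eq_neg_of_add_eq_zero_right (zcanc h3).symm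

theorem A_jac (ham : Ham Q) (x y w : Q) :
    A ham x y w + (A ham y w x + A ham w x y) = 0 := by
  have h1 := A_spec ham x y w
  rw [comm x (y + w), A_spec ham y w x, comm y (w + x), A_spec ham w x y, comm w (x + y),
    ← zc, ← zc, ← cadd, zc, ← zc, ← cadd, add_assoc] at h1
  have h3 : (0 : Zc Q).1 + (x + y + w) = (A ham x y w + (A ham y w x + A ham w x y)).1 + (x + y + w) := by
    rw [czero, zadd]; exact h1
  exact (zcanc h3).symm

theorem A_alt (ham : Ham Q) (x w : Q) : A ham x x w = 0 := by
  apply Zc.ext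
  exact as_zero_of (dbl x w).symm

theorem A_swap (ham : Ham Q) (x y w : Q) : A ham x y w = - A ham y x w := by
  have l1 : ∀ a b y w, A ham (a + b) y w = A ham a y w + A ham b y w := by
    intro a b y w; exact A_add ham y w a b
  have l3 : ∀ x y a b, A ham x y (a + b) = A ham x y a + A ham x y b := by
    intro x y a b; rw [A_rev, l1, A_rev ham x y a, A_rev ham x y b, neg_add]
  have l2 : ∀ x a b w, A ham x (a + b) w = A ham x a w + A ham x b w := by
    intro x a b w
    have h0 := A_jac ham x (a + b) w
    rw [l3, l1] at h0
    have ha := A_jac ham x a w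
    have hb := A_jac ham x b w
    rw [eq_neg_of_add_eq_zero_left h0, eq_neg_of_add_eq_zero_left ha,
      eq_neg_of_add_eq_zero_left hb, neg_add, neg_add, neg_add, neg_add, neg_add]
    abel
  have h := A_alt ham (x + y) w
  rw [l2, l1, l1] at h
  simp only [A_alt, zero_add, add_zero] at h
  exact eq_neg_of_add_eq_zero_right h

theorem A_cyc (ham : Ham Q) (x y w : Q) : A ham x y w = A ham y w x := by
  rw [A_swap, A_rev, A_swap, A_rev]
  simp only [neg_neg]

theorem A_three (ham : Ham Q) (x y w : Q) : (3:ℕ) • A ham x y w = 0 := by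
  have := A_jac ham x y w
  rw [← A_cyc ham y w x, ← A_cyc ham x y w] at this
  rw [← this]; abel

theorem A_center (ham : Ham Q) (z : Zc Q) (y w : Q) : A ham z.1 y w = 0 :=
  Zc.ext (as_c1 z y w)

theorem ham2 (ham : Ham Q) (N : AddSubgroup (Zc Q)) (ht : ∀ n ∈ N, t n ∈ N) (x : Q)
    (h3 : three x ∈ N) (hT : T x ∈ N) (y w : Q) : A ham x y w ∈ N := by
  obtain ⟨n, hn, h⟩ := (ham1 ham N ht x h3 hT y w).1
  have hA : (A ham x y w).1 = as x y w := rfl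
  rcases h with h | h | h
  · have : A ham x y w = n := Zc.ext h
    rwa [this]
  · have : x = (-n + A ham x y w).1 := by rw [cadd, hA, h, cneg, nadd]
    have h0 : A ham x y w = 0 := by rw [this]; exact A_center ham _ _ _
    rw [h0]; exact N.zero_mem
  · have : x = (n + - A ham x y w).1 := by rw [cadd, cneg, hA, h, negadd, nn, addn']
    have h0 : A ham x y w = 0 := by rw [this]; exact A_center ham _ _ _
    rw [h0]; exact N.zero_mem

end basic
end DQ
theorem dq_count : ∀ (n : ℕ) (Z : Type u) [AddCommGroup Z] [Finite Z] (t : Z →+ Z)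
    (α β : Fin 3 → Z) (_ : ∀ i, t (α i) = (3:ℕ) • β i) (u : Z) (_ : u ≠ 0) (_ : (3:ℕ) • u = 0)
    (_ : ∀ (m : Fin 3 → ℤ) (z : Z), (∃ i, ¬ (3:ℤ) ∣ m i) → ∀ N : AddSubgroup Z,
      (∀ x ∈ N, t x ∈ N) → (∑ i, m i • α i) + (3:ℕ) • z ∈ N → (∑ i, m i • β i) + t z ∈ N → u ∈ N),
    Nat.card Z = n → 27 ≤ n := by
  intro n
  induction n using Nat.strong_induction_on with
  | _ n ih =>
  intro Z _ _ t α β hα u hu h3 H hn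
  by_cases hmin : ∀ N : AddSubgroup Z, (∀ x ∈ N, t x ∈ N) → N ≠ ⊥ → u ∈ N
  · -- socle
    have hsoc : ∀ x : Z, (3:ℕ) • x = 0 → t x = 0 → x = 0 ∨ x = u ∨ x = -u := by
      intro x hx htx
      by_cases hx0 : x = 0
      · exact Or.inl hx0
      right
      have hu' := hmin (AddSubgroup.zmultiples x) (by
        intro y hy
        obtain ⟨k, rfl⟩ := AddSubgroup.mem_zmultiples_iff.1 hy
        rw [map_zsmul, htx, smul_zero]; exact AddSubgroup.zero_mem _)
        (by simpa using hx0)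
      obtain ⟨k, hk⟩ := AddSubgroup.mem_zmultiples_iff.1 hu'
      have h3x : (3:ℤ) • x = 0 := by exact_mod_cast hx
      have hk2 : (k % 3) • x = u := by
        rw [← hk]
        conv_rhs => rw [← Int.emod_add_mul_ediv k 3]
        rw [add_smul, mul_comm, mul_smul, h3x, smul_zero, add_zero]
      have : k % 3 = 0 ∨ k % 3 = 1 ∨ k % 3 = 2 := by omega
      rcases this with h | h | h <;> rw [h] at hk2
      · rw [zero_smul] at hk2; exact absurd hk2.symm hu
      · rw [one_smul] at hk2; exact Or.inl hk2
      · right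
        rw [← hk2, eq_neg_iff_add_eq_zero, ← h3x]; 
        rw [show (3:ℤ) = 1 + 2 by norm_num, add_smul, one_smul]
    -- the map (p,s) ↦ t p - 3 s
    let g : Z × Z →+ Z := (t.comp (AddMonoidHom.fst Z Z)) - ((3:ℕ) • AddMonoidHom.snd Z Z)
    have hg : ∀ p s, g (p, s) = t p - (3:ℕ) • s := fun p s => rfl
    have hcard : Nat.card g.ker * Nat.card g.range = n * n := by
      rw [← Nat.card_congr (QuotientAddGroup.quotientKerEquivRange g).toEquiv, mul_comm,
        ← AddSubgroup.card_eq_card_quotient_mul_card_addSubgroup, Nat.card_prod, hn]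
    -- F
    let F : (Fin 3 → Fin 3) × Z → g.ker := fun mz =>
      ⟨((∑ i, ((mz.1 i : ℕ) : ℤ) • α i) + (3:ℕ) • mz.2, (∑ i, ((mz.1 i : ℕ) : ℤ) • β i) + t mz.2), by
        rw [AddMonoidHom.mem_ker, hg]
        simp only [map_add, map_sum, map_zsmul, hα, map_nsmul, Fin.sum_univ_three]
        module⟩
    have hF : ∀ m z m' z', F (m, z) = F (m', z') → m = m' ∧ (z = z' ∨ z = z' + u ∨ z = z' + -u) := by
      intro m z m' z' h
      have h' := Subtype.ext_iff.1 h
      have h1 := sub_eq_zero.2 (congrArg Prod.fst h')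
      have h2 := sub_eq_zero.2 (congrArg Prod.snd h')
      simp only [F] at h1 h2
      have hm : m = m' := by
        by_contra hne
        obtain ⟨i, hi⟩ := Function.ne_iff.1 hne
        have := H (fun i => ((m i : ℕ) : ℤ) - ((m' i : ℕ) : ℤ)) (z - z') ⟨i, by
          have := (m i).2; have := (m' i).2
          have : (m i : ℕ) ≠ m' i := fun h => hi (Fin.ext h)
          omega⟩ ⊥ (by simp) (by
            rw [AddSubgroup.mem_bot, ← h1]
            simp only [Fin.sum_univ_three]; module) (by
            rw [AddSubgroup.mem_bot, ← h2]
            simp only [Fin.sum_univ_three, map_sub]; module)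
        exact hu (by simpa using this)
      refine ⟨hm, ?_⟩
      subst hm
      have := hsoc (z - z') (by rw [← h1]; module) (by rw [← h2, map_sub]; abel)
      rcases this with h | h | h
      · left; exact sub_eq_zero.1 h
      · right; left; rw [← h]; abel
      · right; right; rw [← h]; abel
    have hcF : 27 * n ≤ 3 * Nat.card g.ker := by
      classical
      have := Fintype.ofFinite Z
      have := Fintype.ofFinite g.ker
      have h1 := Finset.card_le_mul_card_image (f := F) Finset.univ 3 (by
        intro b hb
        obtain ⟨⟨m', z'⟩, -, rfl⟩ := Finset.mem_image.1 hb
        refine le_trans (Finset.card_le_card (t := {(m', z'), (m', z' + u), (m', z' + -u)}) ?_)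
          Finset.card_le_three
        rintro ⟨m, z⟩ hmz
        simp only [Finset.mem_filter, Finset.mem_univ, true_and] at hmz
        obtain ⟨rfl, h⟩ := hF _ _ _ _ hmz
        rcases h with rfl | rfl | rfl <;> simp)
      have h2 := Finset.card_le_univ (Finset.univ.image F)
      rw [Nat.card_eq_fintype_card]
      have h3 : (Finset.univ : Finset ((Fin 3 → Fin 3) × Z)).card = 27 * n := by
        rw [Finset.card_univ, Fintype.card_prod, ← hn, Nat.card_eq_fintype_card]
        simp
      rw [h3] at h1
      omega
    have hnpos : 0 < n := hn ▸ Nat.card_pos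
    have h9 : 9 * Nat.card g.range ≤ n := by
      have : (27 * n) * Nat.card g.range ≤ 3 * (n * n) := by
        rw [← hcard, ← mul_assoc]; exact Nat.mul_le_mul_right _ hcF
      have h' : n * (9 * Nat.card g.range) ≤ n * n := by nlinarith
      exact Nat.le_of_mul_le_mul_left h' hnpos
    by_cases hr : g.range = ⊥
    · -- Z is its own socle
      exfalso
      have hall : ∀ z : Z, (3:ℕ) • z = 0 ∧ t z = 0 := by
        intro z
        have a1 : g (0, z) = 0 := by
          have : g (0, z) ∈ g.range := ⟨_, rfl⟩
          rwa [hr, AddSubgroup.mem_bot] at this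
        have a2 : g (z, 0) = 0 := by
          have : g (z, 0) ∈ g.range := ⟨_, rfl⟩
          rwa [hr, AddSubgroup.mem_bot] at this
        rw [hg] at a1 a2
        simp only [map_zero, zero_sub, neg_eq_zero, smul_zero, sub_zero] at a1 a2
        exact ⟨a1, a2⟩
      classical
      have := Fintype.ofFinite Z
      have : Fintype.card Z ≤ 3 := by
        rw [← Finset.card_univ]
        refine le_trans (Finset.card_le_card (t := {0, u, -u}) ?_) Finset.card_le_three
        intro z _
        simpa using hsoc z (hall z).1 (hall z).2
      rw [← Nat.card_eq_fintype_card, hn] at this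
      have : 0 < Nat.card g.range := Nat.card_pos
      omega
    · have hur := hmin g.range (by
        rintro x ⟨⟨p, s⟩, rfl⟩
        exact ⟨(t p, t s), by rw [hg, hg, map_sub, map_nsmul]⟩) hr
      have : 3 ∣ Nat.card g.range := by
        have ho : addOrderOf (⟨u, hur⟩ : g.range) = 3 := by
          have : Fact (Nat.Prime 3) := ⟨Nat.prime_three⟩
          apply addOrderOf_eq_prime
          · exact Subtype.ext h3
          · intro h; exact hu (Subtype.ext_iff.1 h)
        rw [← ho]; exact addOrderOf_dvd_natCard _
      have : 0 < Nat.card g.range := Nat.card_pos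
      omega
  · push Not at hmin
    obtain ⟨N, hN, hNb, huN⟩ := hmin
    let t' : Z ⧸ N →+ Z ⧸ N := QuotientAddGroup.map N N t hN
    have ht' : ∀ z : Z, t' (QuotientAddGroup.mk' N z) = QuotientAddGroup.mk' N (t z) := fun z => rfl
    have hlt : Nat.card (Z ⧸ N) < n := by
      have h1 := AddSubgroup.card_eq_card_quotient_mul_card_addSubgroup N
      rw [hn] at h1
      have h2 : 1 < Nat.card N := by
        rw [AddSubgroup.one_lt_card_iff_ne_bot]; exact hNb
      have h3 : 0 < Nat.card (Z ⧸ N) := Nat.card_pos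
      nlinarith
    have := ih _ hlt (Z ⧸ N) t' (fun i => QuotientAddGroup.mk' N (α i))
      (fun i => QuotientAddGroup.mk' N (β i)) (fun i => by rw [ht', hα, map_nsmul])
      (QuotientAddGroup.mk' N u) (by
        intro h; exact huN ((QuotientAddGroup.eq_zero_iff u).1 h))
      (by rw [← map_nsmul, h3, map_zero]) (by
        intro m z hm N' hN' h1 h2
        obtain ⟨z, rfl⟩ := QuotientAddGroup.mk'_surjective N z
        have := H m z hm (N'.comap (QuotientAddGroup.mk' N)) (by
          intro x hx
          rw [AddSubgroup.mem_comap] at hx ⊢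
          rw [← ht']; exact hN' _ hx) (by
          rw [AddSubgroup.mem_comap]
          simpa only [map_add, map_sum, map_zsmul, map_nsmul] using h1) (by
          rw [AddSubgroup.mem_comap]
          simpa only [map_add, map_sum, map_zsmul, ht'] using h2)
        exact this) rfl
    omega

namespace DQ

theorem main {Q : Type u} [DQ Q] [Finite Q] (ham : Ham Q) (a b c : Q)
    (hna : (a + b) + c ≠ a + (b + c)) : 729 ≤ Nat.card Q := by
  have hu : A ham a b c ≠ 0 := by
    intro h
    have := A_spec ham a b c
    rw [h, czero, zadd] at this
    exact hna this
  have : Finite (Zc Q) := Finite.of_injective Zc.val (fun x y h => Zc.ext h)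
  let e : Fin 3 → Q := ![a, b, c]
  let f : Fin 3 → Q → Zc Q := ![fun x => A ham x b c, fun x => A ham x c a, fun x => A ham x a b]
  have hf : ∀ i, IsAdd (f i) := by
    intro i; fin_cases i
    · exact A_add ham b c
    · exact A_add ham c a
    · exact A_add ham a b
  have hfz : ∀ i (z : Zc Q), f i z.1 = 0 := by
    intro i z; fin_cases i <;> exact A_center ham z _ _
  have alt2 : ∀ x y, A ham x y x = 0 := by
    intro x y; rw [← A_cyc ham x x y]; exact A_alt ham x y
  have hfe : ∀ i j, f i (e j) = if i = j then A ham a b c else 0 := by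
    intro i j
    have h1 : A ham b c a = A ham a b c := (A_cyc ham a b c).symm
    have h2 : A ham c a b = A ham a b c := by rw [← h1, ← A_cyc ham b c a]
    fin_cases i <;> fin_cases j <;> simp [f, e, A_alt, alt2, h1, h2]
  have hfs : ∀ (m : Fin 3 → ℤ) i, (∑ j, m j • f i (e j)) = m i • A ham a b c := by
    intro m i
    simp [hfe]
  have h3u := A_three ham a b c
  have h3uz : (3:ℤ) • A ham a b c = 0 := by exact_mod_cast h3u
  have hdiv : ∀ k : ℤ, ¬ (3:ℤ) ∣ k → ∃ l : ℤ, l • k • A ham a b c = A ham a b c := by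
    intro k hk
    refine ⟨k, ?_⟩
    rw [← mul_smul]
    have : ∃ q, k * k = 1 + q * 3 := by
      have : k % 3 = 1 ∨ k % 3 = 2 := by omega
      rcases this with h | h
      · exact ⟨3 * (k/3)^2 + 2 * (k/3), by
          conv_lhs => rw [← Int.emod_add_mul_ediv k 3, h]
          ring⟩
      · exact ⟨3 * (k/3)^2 + 4 * (k/3) + 1, by
          conv_lhs => rw [← Int.emod_add_mul_ediv k 3, h]
          ring⟩
    obtain ⟨q, hq⟩ := this
    rw [hq, add_smul, mul_smul, h3uz, smul_zero, add_zero, one_smul]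
  have h27 := dq_count _ (Zc Q) t (fun i => three (e i)) (fun i => T (e i))
    (fun i => t_three _) (A ham a b c) hu h3u (by
      intro m z ⟨i, hi⟩ N hN h1 h2
      obtain ⟨x, hx⟩ := exists_comb m e
      have key : f i (x + z.1) ∈ N := by
        have h1' : three (x + z.1) ∈ N := by
          rw [three_add, hx _ three_add, three_z]; exact h1
        have h2' : T (x + z.1) ∈ N := by
          rw [T_add, hx _ T_add]; exact h2
        have := ham2 ham N hN _ h1' h2'
        fin_cases i <;> exact this _ _
      rw [hf, hfz, add_zero, hx _ (hf i), hfs] at key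
      obtain ⟨l, hl⟩ := hdiv _ hi
      rw [← hl]; exact N.zsmul_mem key l) rfl
  choose X hX using fun m : Fin 3 → Fin 3 => exists_comb (fun i => ((m i : ℕ) : ℤ)) e
  have hinj : Function.Injective (fun mz : (Fin 3 → Fin 3) × Zc Q => X mz.1 + mz.2.1) := by
    rintro ⟨m, z⟩ ⟨m', z'⟩ h
    simp only at h
    have hm : m = m' := by
      by_contra hne
      obtain ⟨i, hi⟩ := Function.ne_iff.1 hne
      have h' := congrArg (f i) h
      rw [hf, hf, hfz, hfz, add_zero, add_zero, hX _ _ (hf i), hX _ _ (hf i), hfs, hfs,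
        ← sub_eq_zero, ← sub_smul] at h'
      obtain ⟨l, hl⟩ := hdiv (((m i : ℕ) : ℤ) - ((m' i : ℕ) : ℤ)) (by
          have := (m i).2; have := (m' i).2
          have : (m i : ℕ) ≠ m' i := fun h => hi (Fin.ext h)
          omega)
      rw [h', smul_zero] at hl
      exact hu hl.symm
    subst hm
    rw [Zc.ext (canc h)]
  have := Nat.card_le_card_of_injective _ hinj
  rw [Nat.card_prod] at this
  simp only [Nat.card_eq_fintype_card, Fintype.card_fun, Fintype.card_fin] at this
  omega

end DQ

section build
variable {Q : Type u} (mul : Q → Q → Q)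
    (hb : ∀ a : Q, Function.Bijective (fun x => mul a x) ∧ Function.Bijective (fun x => mul x a))
    (hld : ∀ x a b : Q, mul x (mul a b) = mul (mul x a) (mul x b))
    (hrd : ∀ x a b : Q, mul (mul a b) x = mul (mul a x) (mul b x)) (e : Q)

/-- right translation by e -/
noncomputable def eph : Q ≃ Q := Equiv.ofBijective _ (hb e).2
/-- left translation by e -/
noncomputable def eps : Q ≃ Q := Equiv.ofBijective _ (hb e).1

/-- loop operation -/
noncomputable def ladd (x y : Q) : Q := mul ((eph mul hb e).symm x) ((eps mul hb e).symm y)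

theorem eph_ap (x : Q) : eph mul hb e x = mul x e := rfl
theorem eps_ap (x : Q) : eps mul hb e x = mul e x := rfl

theorem ladd_spec (x y : Q) : ladd mul hb e (mul x e) (mul e y) = mul x y := by
  rw [ladd, ← eph_ap mul hb e, ← eps_ap mul hb e, Equiv.symm_apply_apply, Equiv.symm_apply_apply]

include hb in
theorem ex_ph (x : Q) : ∃ y, mul y e = x := (hb e).2.2 x
include hb in
theorem ex_ps (x : Q) : ∃ y, mul e y = x := (hb e).1.2 x

include hb hld in
theorem idem (x : Q) : mul x x = x := by
  have := hld x x x
  exact ((hb (mul x x)).2.1 this).symm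

include hb in
theorem lcanc {a x y : Q} (h : mul a x = mul a y) : x = y := (hb a).1.1 h
include hb in
theorem rcanc {a x y : Q} (h : mul x a = mul y a) : x = y := (hb a).2.1 h

theorem la_l {x y z : Q} (h : ladd mul hb e x y = ladd mul hb e x z) : y = z := by
  exact (eps mul hb e).symm.injective (lcanc mul hb h)

theorem la_r {x y z : Q} (h : ladd mul hb e y x = ladd mul hb e z x) : y = z := by
  exact (eph mul hb e).symm.injective (rcanc mul hb h)

include hld in
theorem la_z (x : Q) : ladd mul hb e e x = x := by
  obtain ⟨y, rfl⟩ := ex_ps mul hb e x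
  have := ladd_spec mul hb e e y
  rwa [idem mul hb hld e] at this

include hld in
theorem la_z' (x : Q) : ladd mul hb e x e = x := by
  obtain ⟨y, rfl⟩ := ex_ph mul hb e x
  have := ladd_spec mul hb e y e
  rwa [idem mul hb hld e] at this

include hb hld hrd in
theorem pscom (x : Q) : mul e (mul x e) = mul (mul e x) e := by
  rw [hld, idem mul hb hld e]

include hld hrd in
theorem ph_la (x y : Q) : mul (ladd mul hb e x y) e = ladd mul hb e (mul x e) (mul y e) := by
  obtain ⟨x, rfl⟩ := ex_ph mul hb e x
  obtain ⟨y, rfl⟩ := ex_ps mul hb e y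
  rw [ladd_spec, ← pscom mul hb hld hrd, ladd_spec, hrd]

include hld hrd in
theorem ps_la (x y : Q) : mul e (ladd mul hb e x y) = ladd mul hb e (mul e x) (mul e y) := by
  obtain ⟨x, rfl⟩ := ex_ph mul hb e x
  obtain ⟨y, rfl⟩ := ex_ps mul hb e y
  rw [ladd_spec, pscom mul hb hld hrd, ladd_spec, hld]

include hld in
theorem la_ip (x : Q) : ladd mul hb e (mul x e) (mul e x) = x := by
  rw [ladd_spec, idem mul hb hld]

include hld hrd in
theorem la_1 (x a b : Q) : ladd mul hb e x (ladd mul hb e a b) =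
    ladd mul hb e (ladd mul hb e (mul x e) a) (ladd mul hb e (mul e x) b) := by
  obtain ⟨x, rfl⟩ := ex_ph mul hb e x
  obtain ⟨a, rfl⟩ := ex_ps mul hb e a
  obtain ⟨a, rfl⟩ := ex_ph mul hb e a
  obtain ⟨b, rfl⟩ := ex_ps mul hb e b
  obtain ⟨b, rfl⟩ := ex_ps mul hb e b
  -- (e(ae)) + e(eb) = e (ae + eb) = e (ab)
  rw [← ps_la mul hb hld hrd, ladd_spec, ladd_spec]
  rw [hld, ← ladd_spec mul hb e (mul x a) (mul x b), ← ladd_spec mul hb e x a,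
    ← ladd_spec mul hb e x b, ph_la mul hb hld hrd, ps_la mul hb hld hrd,
    pscom mul hb hld hrd, pscom mul hb hld hrd]

include hld hrd in
theorem la_2 (x a b : Q) : ladd mul hb e (ladd mul hb e a b) x =
    ladd mul hb e (ladd mul hb e a (mul x e)) (ladd mul hb e b (mul e x)) := by
  obtain ⟨x, rfl⟩ := ex_ps mul hb e x
  obtain ⟨a, rfl⟩ := ex_ph mul hb e a
  obtain ⟨a, rfl⟩ := ex_ph mul hb e a
  obtain ⟨b, rfl⟩ := ex_ps mul hb e b
  obtain ⟨b, rfl⟩ := ex_ph mul hb e b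
  rw [pscom mul hb hld hrd, ← ph_la mul hb hld hrd, ladd_spec, ladd_spec]
  rw [hrd, ← ladd_spec mul hb e (mul a x) (mul b x), ← ladd_spec mul hb e a x,
    ← ladd_spec mul hb e b x, ph_la mul hb hld hrd, ps_la mul hb hld hrd,
    pscom mul hb hld hrd]

include hld hrd in
theorem tau_ph {x a s : Q} (h : ladd mul hb e (mul x e) a = ladd mul hb e s (mul x e)) :
    ladd mul hb e x a = ladd mul hb e s x := by
  have h1 := la_1 mul hb hld hrd e x a e
  rw [la_z' mul hb hld, la_z' mul hb hld, h] at h1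
  have h2 := la_2 mul hb hld hrd e x s e
  rw [la_z' mul hb hld, la_z mul hb hld] at h2
  rw [h1, h2]

include hld hrd in
theorem tau_ps {x a s : Q} (h : ladd mul hb e (mul e x) a = ladd mul hb e s (mul e x)) :
    ladd mul hb e x a = ladd mul hb e s x := by
  have h1 := la_1 mul hb hld hrd e x e a
  rw [la_z' mul hb hld, la_z mul hb hld, h] at h1
  have h2 := la_2 mul hb hld hrd e x e s
  rw [la_z mul hb hld, la_z mul hb hld] at h2
  rw [h1, h2]

theorem la_ex_r (x y : Q) : ∃ s, ladd mul hb e s x = y := by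
  obtain ⟨w, hw⟩ := (hb ((eps mul hb e).symm x)).2.2 y
  exact ⟨eph mul hb e w, by rw [ladd, Equiv.symm_apply_apply]; exact hw⟩

theorem la_ex_l (x y : Q) : ∃ s, ladd mul hb e x s = y := by
  obtain ⟨w, hw⟩ := (hb ((eph mul hb e).symm x)).1.2 y
  exact ⟨eps mul hb e w, by rw [ladd, Equiv.symm_apply_apply]; exact hw⟩

include hld hrd in
theorem tau_ph' {x a s : Q} (h : ladd mul hb e x a = ladd mul hb e s x) :
    ladd mul hb e (mul x e) a = ladd mul hb e s (mul x e) := by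
  obtain ⟨s', hs⟩ := la_ex_r mul hb e (mul x e) (ladd mul hb e (mul x e) a)
  have h2 := tau_ph mul hb hld hrd e hs.symm
  rw [h] at h2
  rw [← hs, la_r mul hb e h2]

include hld hrd in
theorem tau_ps' {x a s : Q} (h : ladd mul hb e x a = ladd mul hb e s x) :
    ladd mul hb e (mul e x) a = ladd mul hb e s (mul e x) := by
  obtain ⟨s', hs⟩ := la_ex_r mul hb e (mul e x) (ladd mul hb e (mul e x) a)
  have h2 := tau_ps mul hb hld hrd e hs.symm
  rw [h] at h2
  rw [← hs, la_r mul hb e h2]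

include hld hrd in
theorem la_comm (x y : Q) : ladd mul hb e x y = ladd mul hb e y x := by
  obtain ⟨q, hq⟩ := la_ex_r mul hb e x (ladd mul hb e x y)
  obtain ⟨s, hs⟩ := la_ex_l mul hb e y (ladd mul hb e x y)
  -- x + y = q + x, y + s = x + y
  have b1 : ladd mul hb e x (mul y e) = ladd mul hb e (mul q e) x := by
    apply tau_ph mul hb hld hrd
    rw [← ph_la mul hb hld hrd, ← ph_la mul hb hld hrd, hq]
  have b2 : ladd mul hb e (mul y e) s = ladd mul hb e x (mul y e) := tau_ph' mul hb hld hrd e hs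
  have E1 : ladd mul hb e (mul q e) x = ladd mul hb e (mul y e) s := by rw [b2, b1]
  have b3 := tau_ps' mul hb hld hrd e b1
  have b4 : ladd mul hb e y (mul e s) = ladd mul hb e (mul e x) y := by
    apply tau_ps mul hb hld hrd
    rw [← ps_la mul hb hld hrd, ← ps_la mul hb hld hrd, hs]
  have b5 := tau_ph' mul hb hld hrd e b4
  have E2 : ladd mul hb e (mul q e) (mul e x) = ladd mul hb e (mul y e) (mul e s) := by
    rw [b5, b3]
  rw [ladd_spec, ladd_spec] at E2
  obtain ⟨X, rfl⟩ := ex_ps mul hb e x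
  obtain ⟨S, rfl⟩ := ex_ps mul hb e s
  rw [ladd_spec, ladd_spec] at E1
  rw [hld q e X, hld y e S, E1] at E2
  have := rcanc mul hb (rcanc mul hb E2)
  subst this
  exact hq.symm

/-- right inverse -/
noncomputable def lneg (x : Q) : Q := (la_ex_l mul hb e x e).choose
theorem lneg_spec (x : Q) : ladd mul hb e x (lneg mul hb e x) = e :=
  (la_ex_l mul hb e x e).choose_spec

include hld hrd in
theorem lneg_1 (x b : Q) : ladd mul hb e x (ladd mul hb e (lneg mul hb e x) b) = b := by
  obtain ⟨x, rfl⟩ := ex_ph mul hb e x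
  have h1 := la_1 mul hb hld hrd e x (lneg mul hb e (mul x e)) b
  rw [lneg_spec, la_z mul hb hld] at h1
  have h2 := la_1 mul hb hld hrd e x (ladd mul hb e (lneg mul hb e (mul x e)) b) e
  rw [la_z' mul hb hld, la_z' mul hb hld, h1, la_comm mul hb hld hrd] at h2
  exact (la_r mul hb e h2).symm

include hld hrd in
theorem lneg_2 (x b : Q) : ladd mul hb e (lneg mul hb e x) (ladd mul hb e x b) = b := by
  apply la_l mul hb e (x := x)
  rw [lneg_1 mul hb hld hrd]

/-- the loop -/
noncomputable def mkDQ : DQ Q where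
  add := ladd mul hb e
  zero := e
  neg := lneg mul hb e
  ph x := mul x e
  ps x := mul e x
  comm := la_comm mul hb hld hrd e
  zadd := la_z mul hb hld e
  nadd := lneg_2 mul hb hld hrd e
  phadd := ph_la mul hb hld hrd e
  phps := la_ip mul hb hld e
  auto := la_1 mul hb hld hrd e

end build

theorem nonmedial_hamiltonian_distributive_card {Q : Type*} (mul : Q → Q → Q)
    (hQ : IsQuasigroup mul)
    (hld : ∀ x a b : Q, mul x (mul a b) = mul (mul x a) (mul x b))
    (hrd : ∀ x a b : Q, mul (mul a b) x = mul (mul a x) (mul b x))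
    (hham : IsHamiltonian mul)
    (hnonmed : ¬ ∀ x y u v : Q, mul (mul x y) (mul u v) = mul (mul x u) (mul y v)) :
    729 ≤ Cardinal.mk Q := by
  obtain ⟨⟨e⟩, hb⟩ := hQ
  rcases finite_or_infinite Q with hfin | hinf
  swap
  · refine le_trans ?_ (Cardinal.aleph0_le_mk Q)
    exact_mod_cast (Cardinal.natCast_lt_aleph0 (n := 729)).le
  letI : DQ Q := mkDQ mul hb hld hrd e
  have hmul : ∀ x y : Q, mul x y = DQ.ph x + DQ.ps y := fun x y => (ladd_spec mul hb e x y).symm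
  have hz : (0 : Q) = e := rfl
  have hph : ∀ x : Q, DQ.ph x = mul x e := fun x => rfl
  have hps : ∀ x : Q, DQ.ps x = mul e x := fun x => rfl
  have hpsadd : ∀ x y : Q, DQ.ps (x + y) = DQ.ps x + DQ.ps y := ps_la mul hb hld hrd e
  have hpp : ∀ x : Q, DQ.ps (DQ.ph x) = DQ.ph (DQ.ps x) := pscom mul hb hld hrd e
  have ham : DQ.Ham Q := by
    intro P h0 hadd hneg hPph
    have hPps : ∀ p ∈ P, DQ.ps p ∈ P := by
      intro p hp
      have : DQ.ps p = -(DQ.ph p) + p := by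
        have := DQ.nadd (DQ.ph p) (DQ.ps p)
        rw [DQ.phps] at this
        exact this.symm
      rw [this]; exact hadd _ (hneg _ (hPph _ hp)) _ hp
    have hPmul : ∀ p ∈ P, ∀ q ∈ P, mul p q ∈ P := by
      intro p hp q hq
      rw [hmul]; exact hadd _ (hPph _ hp) _ (hPps _ hq)
    have hsurj : ∀ f : Q → Q, Function.Injective f → (∀ p ∈ P, f p ∈ P) →
        ∀ x, f x ∈ P → x ∈ P := by
      intro f hf hfP x hx
      have h1 : Function.Injective (fun p : P => (⟨f p.1, hfP p.1 p.2⟩ : P)) := by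
        intro p q h; exact Subtype.ext (hf (Subtype.ext_iff.1 h))
      obtain ⟨p, hp⟩ := (Finite.surjective_of_injective h1) ⟨f x, hx⟩
      have := hf (Subtype.ext_iff.1 hp)
      rw [← this]; exact p.2
    obtain ⟨-, r, ⟨he, hr1, hr2, hr3⟩, a0, hP⟩ := hham P ⟨⟨0, h0⟩, fun a ha b hb' =>
      ⟨hPmul a ha b hb', fun x hx => hsurj _ (hb a).1.1 (fun p hp => hPmul a ha p hp) x (by
          show mul a x ∈ P; rw [hx]; exact hb'),
        fun x hx => hsurj _ (hb a).2.1 (fun p hp => hPmul p hp a ha) x (by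
          show mul x a ∈ P; rw [hx]; exact hb')⟩⟩
    have hra : r a0 0 := by
      have := h0; rw [hP] at this; exact this
    refine ⟨r, he, ?_, ?_⟩
    · intro a b c d hab hcd
      obtain ⟨a, rfl⟩ := ex_ph mul hb e a
      obtain ⟨b, rfl⟩ := ex_ph mul hb e b
      obtain ⟨c, rfl⟩ := ex_ps mul hb e c
      obtain ⟨d, rfl⟩ := ex_ps mul hb e d
      rw [← hph, ← hph, ← hps, ← hps, ← hmul, ← hmul]
      exact hr1 _ _ _ _ (hr3 _ _ _ _ (he.refl e) hab) (hr2 _ _ _ _ (he.refl e) hcd)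
    · intro x
      rw [hP]
      exact ⟨fun h => he.trans (he.symm hra) h, fun h => he.trans hra h⟩
  have hna : ∃ a b c : Q, (a + b) + c ≠ a + (b + c) := by
    by_contra hcon
    push Not at hcon
    apply hnonmed
    intro x y u v
    simp only [hmul, DQ.phadd, hpsadd, hpp]
    rw [hcon, hcon, ← hcon (DQ.ph (DQ.ps y)), DQ.comm (DQ.ph (DQ.ps y)), hcon]
  obtain ⟨a, b, c, h⟩ := hna
  have := DQ.main ham a b c h
  rw [← Nat.cast_card (α := Q)]
  exact_mod_cast this
end
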